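/- arXiv:1410.0645 — 6 statements merged into one kernel-verified Lean document; each statement's English description precedes it below -/
import Mathlib

section
/- Fix matrices X₁, X₂, X₃, X₄, Y₁, Y₂, Y₃, Y₄ ∈ M₂(ℂ) and complex numbers f, fₓ ∈ ℂ (representing the values of the coefficient function f and its x-derivative at a point, with Yᵢ the x-derivatives of the Xᵢ). Define, for q, r ∈ ℂ, ξ(q,r) = −i fₓ (X₂ + r X₄) − i f (Y₂ + r Y₄) + i f [X₁,X₂] + i f r [X₁,X₄] − i f r [X₂,X₃] + i f r² [X₃,X₄] and η(q,r) = i fₓ (X₃ + q X₄) + i f (Y₃ + q Y₄) − i f [X₁,X₃] − i f q [X₁,X₄] − i f q [X₂,X₃] − i f q² [X₂,X₄]. Then the cross-derivative consistency condition ∂ξ/∂r (q,r) = ∂η/∂q (q,r) holds for all q, r ∈ ℂ if and only if fₓ X₄ + f Y₄ − f [X₁,X₄] = 0, f [X₃,X₄] = 0, and f [X₂,X₄] = 0. -/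
open Complex

attribute [local instance] Matrix.normedAddCommGroup Matrix.normedSpace

/-- The matrix commutator `[A,B] = AB - BA`. -/
noncomputable def matComm (A B : Matrix (Fin 2) (Fin 2) ℂ) : Matrix (Fin 2) (Fin 2) ℂ :=
  A * B - B * A

theorem deriv_quad_aux (A B C : Matrix (Fin 2) (Fin 2) ℂ) (t : ℂ) :
    deriv (fun s : ℂ => A + s • B + (s ^ 2) • C) t = B + (2 * t) • C := by
  have h1 : HasDerivAt (fun s : ℂ => s • B) ((1 : ℂ) • B) t := (hasDerivAt_id t).smul_const B
  have h2 : HasDerivAt (fun s : ℂ => (s ^ 2) • C) ((2 * t) • C) t := by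
    have h := (hasDerivAt_pow 2 t).smul_const C
    have e : ((2 : ℕ) : ℂ) * t ^ (2 - 1) = 2 * t := by norm_num
    rw [e] at h
    exact h
  have h3 := (h1.const_add A).add h2
  rw [one_smul] at h3
  exact h3.deriv

/-- Consistency condition `ξ_r = η_q` (for solvability of `K⁰_q = ξ`, `K⁰_r = η`)
in the extended Estabrook-Wahlquist analysis of the variable-coefficient NLS:
it holds for all `q, r` iff `fₓ X₄ + f Y₄ − f [X₁,X₄] = 0`, `f [X₃,X₄] = 0` and
`f [X₂,X₄] = 0`. -/
theorem vcNLS_consistency (X₁ X₂ X₃ X₄ Y₁ Y₂ Y₃ Y₄ : Matrix (Fin 2) (Fin 2) ℂ)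
    (f fx : ℂ) :
    (∀ q r : ℂ,
      deriv (fun r' : ℂ =>
          (-(I * fx)) • (X₂ + r' • X₄) - (I * f) • (Y₂ + r' • Y₄)
            + (I * f) • matComm X₁ X₂ + (I * f * r') • matComm X₁ X₄
            - (I * f * r') • matComm X₂ X₃ + (I * f * r' ^ 2) • matComm X₃ X₄) r
        = deriv (fun q' : ℂ =>
          (I * fx) • (X₃ + q' • X₄) + (I * f) • (Y₃ + q' • Y₄)
            - (I * f) • matComm X₁ X₃ - (I * f * q') • matComm X₁ X₄
            - (I * f * q') • matComm X₂ X₃ - (I * f * q' ^ 2) • matComm X₂ X₄) q)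
    ↔ (fx • X₄ + f • Y₄ - f • matComm X₁ X₄ = 0
        ∧ f • matComm X₃ X₄ = 0 ∧ f • matComm X₂ X₄ = 0) := by
  have e1 : (fun r' : ℂ =>
          (-(I * fx)) • (X₂ + r' • X₄) - (I * f) • (Y₂ + r' • Y₄)
            + (I * f) • matComm X₁ X₂ + (I * f * r') • matComm X₁ X₄
            - (I * f * r') • matComm X₂ X₃ + (I * f * r' ^ 2) • matComm X₃ X₄) =
      fun s : ℂ => ((-(I * fx)) • X₂ - (I * f) • Y₂ + (I * f) • matComm X₁ X₂)
        + s • ((-(I * fx)) • X₄ - (I * f) • Y₄ + (I * f) • matComm X₁ X₄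
            - (I * f) • matComm X₂ X₃) + (s ^ 2) • ((I * f) • matComm X₃ X₄) := by
    funext s
    module
  have e2 : (fun q' : ℂ =>
          (I * fx) • (X₃ + q' • X₄) + (I * f) • (Y₃ + q' • Y₄)
            - (I * f) • matComm X₁ X₃ - (I * f * q') • matComm X₁ X₄
            - (I * f * q') • matComm X₂ X₃ - (I * f * q' ^ 2) • matComm X₂ X₄) =
      fun s : ℂ => ((I * fx) • X₃ + (I * f) • Y₃ - (I * f) • matComm X₁ X₃)
        + s • ((I * fx) • X₄ + (I * f) • Y₄ - (I * f) • matComm X₁ X₄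
            - (I * f) • matComm X₂ X₃) + (s ^ 2) • (-((I * f) • matComm X₂ X₄)) := by
    funext s
    module
  rw [e1, e2]
  simp only [deriv_quad_aux]
  generalize matComm X₁ X₄ = C14
  generalize matComm X₂ X₃ = C23
  generalize matComm X₃ X₄ = C34
  generalize matComm X₂ X₄ = C24
  have hI : (2 * I : ℂ) ≠ 0 := mul_ne_zero two_ne_zero I_ne_zero
  have key : ∀ q r : ℂ,
      (((-(I * fx)) • X₄ - (I * f) • Y₄ + (I * f) • C14 - (I * f) • C23)
          + (2 * r) • ((I * f) • C34)
        = ((I * fx) • X₄ + (I * f) • Y₄ - (I * f) • C14 - (I * f) • C23)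
          + (2 * q) • (-((I * f) • C24)))
      ↔ r • (f • C34) + q • (f • C24) - (fx • X₄ + f • Y₄ - f • C14) = 0 := by
    intro q r
    rw [← sub_eq_zero, ← smul_eq_zero_iff_right hI (m := r • (f • C34) + q • (f • C24) - _)]
    constructor
    · intro h
      rw [← h]
      module
    · intro h
      rw [← h]
      module
  simp only [key]
  constructor
  · intro h
    have h0 := h 0 0
    have h1 := h 0 1
    have h2 := h 1 0
    simp only [zero_smul, one_smul, zero_add, add_zero, zero_sub, neg_eq_zero] at h0 h1 h2
    rw [h0, sub_zero] at h1 h2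
    exact ⟨h0, h1, h2⟩
  · rintro ⟨h0, h1, h2⟩ q r
    rw [h0, h1, h2]
    simp
end

section
/- Let f, g, v, γ : ℝ² → ℂ be smooth and let X₀, X₁, X₂, X₃ : ℝ² → M₂(ℂ) be smooth matrix-valued functions satisfying, at every point of ℝ²: (i) X₁_t − X₀_x + [X₁,X₀] = 0; (ii) X₂_t + i(v+iγ)X₂ + i(fX₂)_xx − i(f[X₁,X₂])_x − i fₓ[X₁,X₂] − i f[X₁,X₂ₓ] + i f[X₁,[X₁,X₂]] + [X₂,X₀] = 0; (iii) X₃_t − i(v−iγ)X₃ − i(fX₃)_xx + i(f[X₁,X₃])_x + i fₓ[X₁,X₃] + i f[X₁,X₃ₓ] − i f[X₁,[X₁,X₃]] + [X₃,X₀] = 0; (iv) 2i(f[X₂,X₃])_x − i f[X₁,[X₂,X₃]] + i fₓ[X₂,X₃] − i f[X₂,[X₁,X₃]] + i f[X₃,[X₁,X₂]] = 0; (v) f([X₂,X₂ₓ] − [X₂,[X₁,X₂]]) = 0; (vi) f([X₃,X₃ₓ] − [X₃,[X₁,X₃]]) = 0; (vii) g X₂ − f[X₂,[X₂,X₃]]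 = 0; (viii) g X₃ + f[X₃,[X₂,X₃]] = 0. Then for every smooth solution q, r : ℝ² → ℂ of the vcNLS system i q_t + f q_xx + g q² r + v q + i γ q = 0, −i r_t + f r_xx + g r² q + v r − i γ r = 0, the matrices F = X₁ + q X₂ + r X₃ and G = i f (q_x X₂ − r_x X₃) + i fₓ (r X₃ − q X₂) + i f (r X₃ₓ − q X₂ₓ) + i f q [X₁,X₂] − i f r [X₁,X₃] − i f q r [X₂,X₃] + X₀ satisfy the zero-curvature condition F_t − G_x + [F,G] = 0 identically on ℝ². -/
open Complex

attribute [local instance] Matrix.normedAddCommGroup Matrix.normedSpace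

/-- Partial derivative in the first (spatial) variable. -/
noncomputable def Dx {E : Type*} [NormedAddCommGroup E] [NormedSpace ℝ E]
    (F : ℝ × ℝ → E) : ℝ × ℝ → E := fun p => fderiv ℝ F p (1, 0)

/-- Partial derivative in the second (temporal) variable. -/
noncomputable def Dt {E : Type*} [NormedAddCommGroup E] [NormedSpace ℝ E]
    (F : ℝ × ℝ → E) : ℝ × ℝ → E := fun p => fderiv ℝ F p (0, 1)

abbrev M2 := Matrix (Fin 2) (Fin 2) ℂ

lemma mc_add_left (A B C : M2) : matComm (A + B) C = matComm A C + matComm B C := by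
  simp only [matComm]; noncomm_ring
lemma mc_add_right (A B C : M2) : matComm A (B + C) = matComm A B + matComm A C := by
  simp only [matComm]; noncomm_ring
lemma mc_sub_right (A B C : M2) : matComm A (B - C) = matComm A B - matComm A C := by
  simp only [matComm]; noncomm_ring
lemma mc_smul_left (c : ℂ) (A B : M2) : matComm (c • A) B = c • matComm A B := by
  simp only [matComm, smul_mul_assoc, mul_smul_comm, smul_sub]
lemma mc_smul_right (c : ℂ) (A B : M2) : matComm A (c • B) = c • matComm A B := by
  simp only [matComm, smul_mul_assoc, mul_smul_comm, smul_sub]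
lemma mc_self (A : M2) : matComm A A = 0 := by simp [matComm]
lemma mc_swap (A B : M2) : matComm A B = - matComm B A := by simp [matComm]

/-- The commutator as a continuous bilinear map. -/
noncomputable def mcL : M2 →L[ℝ] M2 →L[ℝ] M2 :=
  LinearMap.toContinuousBilinearMap
    (LinearMap.mk₂ ℝ matComm mc_add_left
      (fun c A B => by simp only [matComm, smul_mul_assoc, mul_smul_comm, smul_sub])
      mc_add_right
      (fun c A B => by simp only [matComm, smul_mul_assoc, mul_smul_comm, smul_sub]))

lemma mcL_apply (A B : M2) : mcL A B = matComm A B := rfl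

lemma diff_mc {A B : ℝ × ℝ → M2} (hA : Differentiable ℝ A) (hB : Differentiable ℝ B) :
    Differentiable ℝ (fun p => matComm (A p) (B p)) := fun p =>
  (mcL.hasFDerivAt_of_bilinear (hA p).hasFDerivAt (hB p).hasFDerivAt).differentiableAt

lemma Dx_mc {A B : ℝ × ℝ → M2} (hA : Differentiable ℝ A) (hB : Differentiable ℝ B) (p : ℝ × ℝ) :
    Dx (fun p => matComm (A p) (B p)) p
      = matComm (Dx A p) (B p) + matComm (A p) (Dx B p) := by
  have h := (mcL.hasFDerivAt_of_bilinear (hA p).hasFDerivAt (hB p).hasFDerivAt).fderiv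
  have h' := congrArg (fun L : ℝ × ℝ →L[ℝ] M2 => L (1, 0)) h
  refine Eq.trans h' ?_
  rw [add_comm (matComm _ _)]
  rfl

section
variable {E : Type*} [NormedAddCommGroup E] [NormedSpace ℝ E] [NormedSpace ℂ E]
  [IsScalarTower ℝ ℂ E]

lemma Dx_add {A B : ℝ × ℝ → E} (hA : Differentiable ℝ A) (hB : Differentiable ℝ B) (p : ℝ × ℝ) :
    Dx (fun p => A p + B p) p = Dx A p + Dx B p := by
  simp only [Dx, fderiv_fun_add (hA p) (hB p)]; rfl
lemma Dx_sub {A B : ℝ × ℝ → E} (hA : Differentiable ℝ A) (hB : Differentiable ℝ B) (p : ℝ × ℝ) :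
    Dx (fun p => A p - B p) p = Dx A p - Dx B p := by
  simp only [Dx, fderiv_fun_sub (hA p) (hB p)]; rfl
lemma Dt_add {A B : ℝ × ℝ → E} (hA : Differentiable ℝ A) (hB : Differentiable ℝ B) (p : ℝ × ℝ) :
    Dt (fun p => A p + B p) p = Dt A p + Dt B p := by
  simp only [Dt, fderiv_fun_add (hA p) (hB p)]; rfl
lemma Dx_smul {c : ℝ × ℝ → ℂ} {A : ℝ × ℝ → E} (hc : Differentiable ℝ c)
    (hA : Differentiable ℝ A) (p : ℝ × ℝ) :
    Dx (fun p => c p • A p) p = c p • Dx A p + Dx c p • A p := by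
  simp only [Dx, fderiv_fun_smul (hc p) (hA p)]; rfl
lemma Dt_smul {c : ℝ × ℝ → ℂ} {A : ℝ × ℝ → E} (hc : Differentiable ℝ c)
    (hA : Differentiable ℝ A) (p : ℝ × ℝ) :
    Dt (fun p => c p • A p) p = c p • Dt A p + Dt c p • A p := by
  simp only [Dt, fderiv_fun_smul (hc p) (hA p)]; rfl
lemma diff_smul {c : ℝ × ℝ → ℂ} {A : ℝ × ℝ → E} (hc : Differentiable ℝ c)
    (hA : Differentiable ℝ A) : Differentiable ℝ (fun p => c p • A p) := hc.smul hA
lemma diff_Dx {F : Type*} [NormedAddCommGroup F] [NormedSpace ℝ F] {A : ℝ × ℝ → F}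
    (hA : ContDiff ℝ (⊤ : ℕ∞) A) : Differentiable ℝ (Dx A) := by
  have h : ContDiff ℝ 1 (fderiv ℝ A) := hA.fderiv_right (by norm_cast)
  exact fun p => ((h.differentiable (by norm_num)) p).clm_apply (differentiableAt_const _)
end

lemma Dx_mul {c d : ℝ × ℝ → ℂ} (hc : Differentiable ℝ c)
    (hd : Differentiable ℝ d) (p : ℝ × ℝ) :
    Dx (fun p => c p * d p) p = c p * Dx d p + Dx c p * d p := Dx_smul hc hd p
lemma Dx_I_mul {d : ℝ × ℝ → ℂ} (hd : Differentiable ℝ d) (p : ℝ × ℝ) :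
    Dx (fun p => I * d p) p = I * Dx d p := by
  rw [Dx_mul (differentiable_const _) hd]; simp [Dx]

/-- If the coefficient matrices `X₀, X₁, X₂, X₃` satisfy the eight constraints of the
extended Estabrook-Wahlquist method for the vcNLS system, then for every smooth
solution `(q, r)` of the vcNLS system the matrices `F` and `G` form a Lax pair:
the zero-curvature condition `F_t − G_x + [F,G] = 0` holds identically. -/
theorem vcNLS_zero_curvature (f g v γ : ℝ × ℝ → ℂ)
    (X₀ X₁ X₂ X₃ : ℝ × ℝ → Matrix (Fin 2) (Fin 2) ℂ)
    (hf : ContDiff ℝ (⊤ : ℕ∞) f) (hg : ContDiff ℝ (⊤ : ℕ∞) g) (hv : ContDiff ℝ (⊤ : ℕ∞) v)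
    (hγ : ContDiff ℝ (⊤ : ℕ∞) γ)
    (hX₀ : ContDiff ℝ (⊤ : ℕ∞) X₀) (hX₁ : ContDiff ℝ (⊤ : ℕ∞) X₁) (hX₂ : ContDiff ℝ (⊤ : ℕ∞) X₂)
    (hX₃ : ContDiff ℝ (⊤ : ℕ∞) X₃)
    (h1 : ∀ p : ℝ × ℝ, Dt X₁ p - Dx X₀ p + matComm (X₁ p) (X₀ p) = 0)
    (h2 : ∀ p : ℝ × ℝ,
      Dt X₂ p + (I * (v p + I * γ p)) • X₂ p
        + I • Dx (Dx (fun p' => f p' • X₂ p')) p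
        - I • Dx (fun p' => f p' • matComm (X₁ p') (X₂ p')) p
        - (I * Dx f p) • matComm (X₁ p) (X₂ p)
        - (I * f p) • matComm (X₁ p) (Dx X₂ p)
        + (I * f p) • matComm (X₁ p) (matComm (X₁ p) (X₂ p))
        + matComm (X₂ p) (X₀ p) = 0)
    (h3 : ∀ p : ℝ × ℝ,
      Dt X₃ p - (I * (v p - I * γ p)) • X₃ p
        - I • Dx (Dx (fun p' => f p' • X₃ p')) p
        + I • Dx (fun p' => f p' • matComm (X₁ p') (X₃ p')) p
        + (I * Dx f p) • matComm (X₁ p) (X₃ p)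
        + (I * f p) • matComm (X₁ p) (Dx X₃ p)
        - (I * f p) • matComm (X₁ p) (matComm (X₁ p) (X₃ p))
        + matComm (X₃ p) (X₀ p) = 0)
    (h4 : ∀ p : ℝ × ℝ,
      (2 * I) • Dx (fun p' => f p' • matComm (X₂ p') (X₃ p')) p
        - (I * f p) • matComm (X₁ p) (matComm (X₂ p) (X₃ p))
        + (I * Dx f p) • matComm (X₂ p) (X₃ p)
        - (I * f p) • matComm (X₂ p) (matComm (X₁ p) (X₃ p))
        + (I * f p) • matComm (X₃ p) (matComm (X₁ p) (X₂ p)) = 0)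
    (h5 : ∀ p : ℝ × ℝ,
      f p • (matComm (X₂ p) (Dx X₂ p)
        - matComm (X₂ p) (matComm (X₁ p) (X₂ p))) = 0)
    (h6 : ∀ p : ℝ × ℝ,
      f p • (matComm (X₃ p) (Dx X₃ p)
        - matComm (X₃ p) (matComm (X₁ p) (X₃ p))) = 0)
    (h7 : ∀ p : ℝ × ℝ,
      g p • X₂ p - f p • matComm (X₂ p) (matComm (X₂ p) (X₃ p)) = 0)
    (h8 : ∀ p : ℝ × ℝ,
      g p • X₃ p + f p • matComm (X₃ p) (matComm (X₂ p) (X₃ p)) = 0)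
    (q r : ℝ × ℝ → ℂ) (hq : ContDiff ℝ (⊤ : ℕ∞) q) (hr : ContDiff ℝ (⊤ : ℕ∞) r)
    (heq1 : ∀ p : ℝ × ℝ,
      I * Dt q p + f p * Dx (Dx q) p + g p * (q p) ^ 2 * r p
        + v p * q p + I * γ p * q p = 0)
    (heq2 : ∀ p : ℝ × ℝ,
      -I * Dt r p + f p * Dx (Dx r) p + g p * (r p) ^ 2 * q p
        + v p * r p - I * γ p * r p = 0)
    (F G : ℝ × ℝ → Matrix (Fin 2) (Fin 2) ℂ)
    (hF : F = fun p => X₁ p + q p • X₂ p + r p • X₃ p)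
    (hG : G = fun p =>
      (I * f p) • (Dx q p • X₂ p - Dx r p • X₃ p)
        + (I * Dx f p) • (r p • X₃ p - q p • X₂ p)
        + (I * f p) • (r p • Dx X₃ p - q p • Dx X₂ p)
        + (I * f p * q p) • matComm (X₁ p) (X₂ p)
        - (I * f p * r p) • matComm (X₁ p) (X₃ p)
        - (I * f p * q p * r p) • matComm (X₂ p) (X₃ p)
        + X₀ p) :
    ∀ p : ℝ × ℝ, Dt F p - Dx G p + matComm (F p) (G p) = 0 := by
  have df := hf.differentiable (by norm_num)
  have dq := hq.differentiable (by norm_num)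
  have dr := hr.differentiable (by norm_num)
  have d0 := hX₀.differentiable (by norm_num)
  have d1 := hX₁.differentiable (by norm_num)
  have d2 := hX₂.differentiable (by norm_num)
  have d3 := hX₃.differentiable (by norm_num)
  have dfx := diff_Dx hf
  have dqx := diff_Dx hq
  have drx := diff_Dx hr
  have d2x := diff_Dx hX₂
  have d3x := diff_Dx hX₃
  have d12 := diff_mc d1 d2
  have d13 := diff_mc d1 d3
  have d23 := diff_mc d2 d3
  have dIf : Differentiable ℝ (fun p => I * f p) := df.const_mul I
  have dIfx : Differentiable ℝ (fun p => I * Dx f p) := dfx.const_mul I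
  have dIfq : Differentiable ℝ (fun p => I * f p * q p) := dIf.mul dq
  have dIfr : Differentiable ℝ (fun p => I * f p * r p) := dIf.mul dr
  have dIfqr : Differentiable ℝ (fun p => I * f p * q p * r p) := dIfq.mul dr
  have e1 := (diff_smul dqx d2).fun_sub (diff_smul drx d3)
  have e2 := (diff_smul dr d3).fun_sub (diff_smul dq d2)
  have e3 := (diff_smul dr d3x).fun_sub (diff_smul dq d2x)
  have t1 := diff_smul dIf e1
  have t2 := diff_smul dIfx e2
  have t3 := diff_smul dIf e3
  have t4 := diff_smul dIfq d12
  have t5 := diff_smul dIfr d13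
  have t6 := diff_smul dIfqr d23
  have fx2 : Dx (fun p' => f p' • X₂ p') = fun p => f p • Dx X₂ p + Dx f p • X₂ p :=
    funext (Dx_smul df d2)
  have fx3 : Dx (fun p' => f p' • X₃ p') = fun p => f p • Dx X₃ p + Dx f p • X₃ p :=
    funext (Dx_smul df d3)
  intro p
  have hFt : Dt F p = Dt X₁ p + (q p • Dt X₂ p + Dt q p • X₂ p)
      + (r p • Dt X₃ p + Dt r p • X₃ p) := by
    rw [hF, Dt_add (d1.fun_add (diff_smul dq d2)) (diff_smul dr d3),
      Dt_add d1 (diff_smul dq d2), Dt_smul dq d2, Dt_smul dr d3]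
  have hGx := congrArg (fun H => Dx H p) hG
  beta_reduce at hGx
  rw [Dx_add (((((t1.fun_add t2).fun_add t3).fun_add t4).fun_sub t5).fun_sub t6) d0,
    Dx_sub ((((t1.fun_add t2).fun_add t3).fun_add t4).fun_sub t5) t6,
    Dx_sub (((t1.fun_add t2).fun_add t3).fun_add t4) t5,
    Dx_add ((t1.fun_add t2).fun_add t3) t4, Dx_add (t1.fun_add t2) t3, Dx_add t1 t2,
    Dx_smul dIf e1, Dx_smul dIfx e2, Dx_smul dIf e3, Dx_smul dIfq d12, Dx_smul dIfr d13,
    Dx_smul dIfqr d23, Dx_mul dIfq dr, Dx_mul dIf dq, Dx_mul dIf dr, Dx_I_mul df, Dx_I_mul dfx,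
    Dx_mc d1 d2, Dx_mc d1 d3, Dx_mc d2 d3,
    Dx_sub (diff_smul dqx d2) (diff_smul drx d3), Dx_sub (diff_smul dr d3) (diff_smul dq d2),
    Dx_sub (diff_smul dr d3x) (diff_smul dq d2x),
    Dx_smul dqx d2, Dx_smul drx d3, Dx_smul dr d3, Dx_smul dq d2, Dx_smul dr d3x,
    Dx_smul dq d2x] at hGx
  have k1 := h1 p
  have k2 := h2 p
  have k3 := h3 p
  have k4 := h4 p
  have k5 := h5 p
  have k6 := h6 p
  have k7 := h7 p
  have k8 := h8 p
  rw [fx2, Dx_add (diff_smul df d2x) (diff_smul dfx d2), Dx_smul df d2x, Dx_smul dfx d2,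
    Dx_smul df d12, Dx_mc d1 d2] at k2
  rw [fx3, Dx_add (diff_smul df d3x) (diff_smul dfx d3), Dx_smul df d3x, Dx_smul dfx d3,
    Dx_smul df d13, Dx_mc d1 d3] at k3
  rw [Dx_smul df d23, Dx_mc d2 d3] at k4
  have hqt : Dt q p = I * (f p * Dx (Dx q) p + g p * (q p) ^ 2 * r p
        + v p * q p + I * γ p * q p) := by
    linear_combination (-I) * heq1 p + Dt q p * I_mul_I
  have hrt : Dt r p = -I * (f p * Dx (Dx r) p + g p * (r p) ^ 2 * q p
        + v p * r p - I * γ p * r p) := by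
    linear_combination I * heq2 p + Dt r p * I_mul_I
  rw [hFt, hGx, hqt, hrt, hF, hG]
  simp only [mc_add_left, mc_add_right, mc_sub_right, mc_smul_left, mc_smul_right, mc_self,
    mc_swap (X₃ p) (X₂ p), mc_swap (Dx X₂ p) (X₃ p)] at k2 k3 k4 k5 k6 k7 k8 ⊢
  linear_combination (norm := module) k1 + q p • k2 + r p • k3 + (q p * r p) • k4
    - (I * q p ^ 2) • k5 + (I * r p ^ 2) • k6 + (I * q p ^ 2 * r p) • k7
    - (I * q p * r p ^ 2) • k8
end

section
/- Let f, g, v, γ, f₁, f₇, g₁, g₁₃, p₁, p₂ : ℝ² → ℂ be smooth, with p₁ and p₂ nowhere zero, and set X₀ = [[g₁, 0],[0, g₁₃]], X₁ = [[f₁, 0],[0, f₇]], X₂ = [[0, i p₁],[0, 0]], X₃ = [[0, 0],[−i p₂, 0]]. Then the eight matrix constraints (i) X₁_t − X₀_x + [X₁,X₀] = 0; (ii) X₂_t + i(v+iγ)X₂ + i(fX₂)_xx − i(f[X₁,X₂])_x − i fₓ[X₁,X₂] − i f[X₁,X₂ₓ] + i f[X₁,[X₁,X₂]] + [X₂,X₀]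 = 0; (iii) X₃_t − i(v−iγ)X₃ − i(fX₃)_xx + i(f[X₁,X₃])_x + i fₓ[X₁,X₃] + i f[X₁,X₃ₓ] − i f[X₁,[X₁,X₃]] + [X₃,X₀] = 0; (iv) 2i(f[X₂,X₃])_x − i f[X₁,[X₂,X₃]] + i fₓ[X₂,X₃] − i f[X₂,[X₁,X₃]] + i f[X₃,[X₁,X₂]] = 0; (v) f([X₂,X₂ₓ] − [X₂,[X₁,X₂]]) = 0; (vi) f([X₃,X₃ₓ] − [X₃,[X₁,X₃]]) = 0; (vii) g X₂ − f[X₂,[X₂,X₃]] = 0; (viii) g X₃ + f[X₃,[X₂,X₃]] = 0 all hold at every point of ℝ² if and only if the six scalar equations hold at every point: (KC1) f₁_t − g₁ₓ = 0; (KC2) f₇_t − g₁₃ₓ = 0; (KC3) i p₁_t − i p₁(g₁ − g₁₃ − i v + γ) − (f p₁)_xx + 2(f₁ − f₇)(p₁ f)_x − f p₁(f₁ − f₇)² + f p₁(f₁ − f₇)ₓ = 0; (KC4) i p₂_t + i p₂(g₁ − g₁₃ − i v − γ) + (f p₂)_xx + 2(f₁ − f₇)(f p₂)_x + (f₁ −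 f₇)² f p₂ + f p₂(f₁ − f₇)ₓ = 0; (KC5) fₓ p₁ p₂ + 2(f p₁ p₂)ₓ = 0; (KC6) g + 2 f p₁ p₂ = 0. -/
open Complex

attribute [local instance] Matrix.normedAddCommGroup Matrix.normedSpace

section helpers

lemma fderiv_mat {a b c d : ℝ × ℝ → ℂ} {p : ℝ × ℝ} (w : ℝ × ℝ)
    (ha : DifferentiableAt ℝ a p) (hb : DifferentiableAt ℝ b p)
    (hc : DifferentiableAt ℝ c p) (hd : DifferentiableAt ℝ d p) :
    fderiv ℝ (fun p => (!![a p, b p; c p, d p] : Matrix (Fin 2) (Fin 2) ℂ)) p w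
      = !![fderiv ℝ a p w, fderiv ℝ b p w; fderiv ℝ c p w, fderiv ℝ d p w] := by
  let L : ℝ × ℝ →L[ℝ] (Fin 2 → Fin 2 → ℂ) :=
    ContinuousLinearMap.pi fun i => ContinuousLinearMap.pi fun j =>
      !![fderiv ℝ a p, fderiv ℝ b p; fderiv ℝ c p, fderiv ℝ d p] i j
  let G : ℝ × ℝ → (Fin 2 → Fin 2 → ℂ) := fun p i j => !![a p, b p; c p, d p] i j
  have h : HasFDerivAt G L p := by
    rw [hasFDerivAt_pi']
    intro i
    rw [hasFDerivAt_pi']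
    intro j
    fin_cases i <;> fin_cases j
    · exact ha.hasFDerivAt
    · exact hb.hasFDerivAt
    · exact hc.hasFDerivAt
    · exact hd.hasFDerivAt
  have h2 : fderiv ℝ (fun p => (!![a p, b p; c p, d p] : Matrix (Fin 2) (Fin 2) ℂ)) p = L :=
    HasFDerivAt.fderiv h
  rw [h2]
  ext i j
  fin_cases i <;> fin_cases j <;> rfl

lemma Dx_mat {a b c d : ℝ × ℝ → ℂ}
    (ha : ContDiff ℝ (⊤ : ℕ∞) a) (hb : ContDiff ℝ (⊤ : ℕ∞) b)
    (hc : ContDiff ℝ (⊤ : ℕ∞) c) (hd : ContDiff ℝ (⊤ : ℕ∞) d) :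
    Dx (fun p => (!![a p, b p; c p, d p] : Matrix (Fin 2) (Fin 2) ℂ))
      = fun p => !![Dx a p, Dx b p; Dx c p, Dx d p] := by
  funext p
  exact fderiv_mat _ (ha.differentiable (by simp) p) (hb.differentiable (by simp) p)
    (hc.differentiable (by simp) p) (hd.differentiable (by simp) p)

lemma Dt_mat {a b c d : ℝ × ℝ → ℂ}
    (ha : ContDiff ℝ (⊤ : ℕ∞) a) (hb : ContDiff ℝ (⊤ : ℕ∞) b)
    (hc : ContDiff ℝ (⊤ : ℕ∞) c) (hd : ContDiff ℝ (⊤ : ℕ∞) d) :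
    Dt (fun p => (!![a p, b p; c p, d p] : Matrix (Fin 2) (Fin 2) ℂ))
      = fun p => !![Dt a p, Dt b p; Dt c p, Dt d p] := by
  funext p
  exact fderiv_mat _ (ha.differentiable (by simp) p) (hb.differentiable (by simp) p)
    (hc.differentiable (by simp) p) (hd.differentiable (by simp) p)

lemma Dx_smooth {a : ℝ × ℝ → ℂ} (ha : ContDiff ℝ (⊤ : ℕ∞) a) :
    ContDiff ℝ (⊤ : ℕ∞) (Dx a) := by
  have h : ContDiff ℝ (⊤ : ℕ∞) (fderiv ℝ a) := ha.fderiv_right (by norm_cast)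
  exact h.clm_apply contDiff_const

lemma Dx_mul_s11 {a b : ℝ × ℝ → ℂ} (ha : ContDiff ℝ (⊤ : ℕ∞) a) (hb : ContDiff ℝ (⊤ : ℕ∞) b) :
    Dx (fun p => a p * b p) = fun p => a p * Dx b p + Dx a p * b p := by
  funext p
  simp only [Dx]
  rw [fderiv_fun_mul (ha.differentiable (by simp) p) (hb.differentiable (by simp) p)]
  simp [mul_comm]

lemma Dx_sub_s11 {a b : ℝ × ℝ → ℂ} (ha : ContDiff ℝ (⊤ : ℕ∞) a) (hb : ContDiff ℝ (⊤ : ℕ∞) b) :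
    Dx (fun p => a p - b p) = fun p => Dx a p - Dx b p := by
  funext p
  simp only [Dx]
  rw [fderiv_fun_sub (ha.differentiable (by simp) p) (hb.differentiable (by simp) p)]
  simp

lemma Dx_cmul {a : ℝ × ℝ → ℂ} (k : ℂ) (ha : ContDiff ℝ (⊤ : ℕ∞) a) :
    Dx (fun p => k * a p) = fun p => k * Dx a p := by
  funext p
  simp only [Dx]
  rw [fderiv_const_mul (ha.differentiable (by simp) p)]
  simp

lemma Dt_cmul {a : ℝ × ℝ → ℂ} (k : ℂ) (ha : ContDiff ℝ (⊤ : ℕ∞) a) :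
    Dt (fun p => k * a p) = fun p => k * Dt a p := by
  funext p
  simp only [Dt]
  rw [fderiv_const_mul (ha.differentiable (by simp) p)]
  simp

lemma Dx_zero : Dx (fun _ : ℝ × ℝ => (0 : ℂ)) = fun _ => 0 := by
  funext p; simp [Dx]

lemma Dt_zero : Dt (fun _ : ℝ × ℝ => (0 : ℂ)) = fun _ => 0 := by
  funext p; simp [Dt]

lemma mat_eq_zero (a b c d : ℂ) :
    (!![a, b; c, d] : Matrix (Fin 2) (Fin 2) ℂ) = 0 ↔ a = 0 ∧ b = 0 ∧ c = 0 ∧ d = 0 := by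
  constructor
  · intro h
    exact ⟨congrFun (congrFun h 0) 0, congrFun (congrFun h 0) 1, congrFun (congrFun h 1) 0,
      congrFun (congrFun h 1) 1⟩
  · rintro ⟨rfl, rfl, rfl, rfl⟩
    ext i j; fin_cases i <;> fin_cases j <;> rfl

lemma mat_congr {a b c d a' b' c' d' : ℂ} (ha : a = a') (hb : b = b') (hc : c = c')
    (hd : d = d') : (!![a, b; c, d] : Matrix (Fin 2) (Fin 2) ℂ) = !![a', b'; c', d'] := by
  rw [ha, hb, hc, hd]

lemma comm_mat (a b c d a' b' c' d' : ℂ) :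
    matComm !![a, b; c, d] !![a', b'; c', d'] =
      !![b * c' - b' * c, a * b' + b * d' - a' * b - b' * d;
        c * a' + d * c' - c' * a - d' * c, c * b' - c' * b] := by
  unfold matComm
  ext i j; fin_cases i <;> fin_cases j <;> simp [Matrix.mul_apply] <;> ring

lemma add_mat (a b c d a' b' c' d' : ℂ) :
    (!![a, b; c, d] + !![a', b'; c', d'] : Matrix (Fin 2) (Fin 2) ℂ) =
      !![a + a', b + b'; c + c', d + d'] := by
  ext i j; fin_cases i <;> fin_cases j <;> rfl

lemma sub_mat (a b c d a' b' c' d' : ℂ) :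
    (!![a, b; c, d] - !![a', b'; c', d'] : Matrix (Fin 2) (Fin 2) ℂ) =
      !![a - a', b - b'; c - c', d - d'] := by
  ext i j; fin_cases i <;> fin_cases j <;> rfl

lemma smul_mat (k a b c d : ℂ) :
    (k • !![a, b; c, d] : Matrix (Fin 2) (Fin 2) ℂ) = !![k * a, k * b; k * c, k * d] := by
  ext i j; fin_cases i <;> fin_cases j <;> rfl

end helpers

/-- On Khawaja's matrix ansatz, the eight matrix constraints of the extended
Estabrook-Wahlquist method for the vcNLS equation hold at every point iff the six
scalar determining equations (KC1)-(KC6) hold at every point. -/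
theorem vcNLS_constraints_iff_scalar (f g v γ f₁ f₇ g₁ g₁₃ p₁ p₂ : ℝ × ℝ → ℂ)
    (hf : ContDiff ℝ (⊤ : ℕ∞) f) (hg : ContDiff ℝ (⊤ : ℕ∞) g) (hv : ContDiff ℝ (⊤ : ℕ∞) v)
    (hγ : ContDiff ℝ (⊤ : ℕ∞) γ) (hf₁ : ContDiff ℝ (⊤ : ℕ∞) f₁) (hf₇ : ContDiff ℝ (⊤ : ℕ∞) f₇)
    (hg₁ : ContDiff ℝ (⊤ : ℕ∞) g₁) (hg₁₃ : ContDiff ℝ (⊤ : ℕ∞) g₁₃)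
    (hp₁ : ContDiff ℝ (⊤ : ℕ∞) p₁) (hp₂ : ContDiff ℝ (⊤ : ℕ∞) p₂)
    (hp₁ne : ∀ p : ℝ × ℝ, p₁ p ≠ 0) (hp₂ne : ∀ p : ℝ × ℝ, p₂ p ≠ 0)
    (X₀ X₁ X₂ X₃ : ℝ × ℝ → Matrix (Fin 2) (Fin 2) ℂ)
    (hX₀ : X₀ = fun p => !![g₁ p, 0; 0, g₁₃ p])
    (hX₁ : X₁ = fun p => !![f₁ p, 0; 0, f₇ p])
    (hX₂ : X₂ = fun p => !![0, I * p₁ p; 0, 0])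
    (hX₃ : X₃ = fun p => !![0, 0; -I * p₂ p, 0]) :
    ((∀ p : ℝ × ℝ, Dt X₁ p - Dx X₀ p + matComm (X₁ p) (X₀ p) = 0)
      ∧ (∀ p : ℝ × ℝ,
          Dt X₂ p + (I * (v p + I * γ p)) • X₂ p
            + I • Dx (Dx (fun p' => f p' • X₂ p')) p
            - I • Dx (fun p' => f p' • matComm (X₁ p') (X₂ p')) p
            - (I * Dx f p) • matComm (X₁ p) (X₂ p)
            - (I * f p) • matComm (X₁ p) (Dx X₂ p)
            + (I * f p) • matComm (X₁ p) (matComm (X₁ p) (X₂ p))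
            + matComm (X₂ p) (X₀ p) = 0)
      ∧ (∀ p : ℝ × ℝ,
          Dt X₃ p - (I * (v p - I * γ p)) • X₃ p
            - I • Dx (Dx (fun p' => f p' • X₃ p')) p
            + I • Dx (fun p' => f p' • matComm (X₁ p') (X₃ p')) p
            + (I * Dx f p) • matComm (X₁ p) (X₃ p)
            + (I * f p) • matComm (X₁ p) (Dx X₃ p)
            - (I * f p) • matComm (X₁ p) (matComm (X₁ p) (X₃ p))
            + matComm (X₃ p) (X₀ p) = 0)
      ∧ (∀ p : ℝ × ℝ,
          (2 * I) • Dx (fun p' => f p' • matComm (X₂ p') (X₃ p')) p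
            - (I * f p) • matComm (X₁ p) (matComm (X₂ p) (X₃ p))
            + (I * Dx f p) • matComm (X₂ p) (X₃ p)
            - (I * f p) • matComm (X₂ p) (matComm (X₁ p) (X₃ p))
            + (I * f p) • matComm (X₃ p) (matComm (X₁ p) (X₂ p)) = 0)
      ∧ (∀ p : ℝ × ℝ,
          f p • (matComm (X₂ p) (Dx X₂ p)
            - matComm (X₂ p) (matComm (X₁ p) (X₂ p))) = 0)
      ∧ (∀ p : ℝ × ℝ,
          f p • (matComm (X₃ p) (Dx X₃ p)
            - matComm (X₃ p) (matComm (X₁ p) (X₃ p))) = 0)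
      ∧ (∀ p : ℝ × ℝ,
          g p • X₂ p - f p • matComm (X₂ p) (matComm (X₂ p) (X₃ p)) = 0)
      ∧ (∀ p : ℝ × ℝ,
          g p • X₃ p + f p • matComm (X₃ p) (matComm (X₂ p) (X₃ p)) = 0))
    ↔ (∀ p : ℝ × ℝ,
        (Dt f₁ p - Dx g₁ p = 0)
        ∧ (Dt f₇ p - Dx g₁₃ p = 0)
        ∧ (I * Dt p₁ p - I * p₁ p * (g₁ p - g₁₃ p - I * v p + γ p)
            - Dx (Dx (fun p' => f p' * p₁ p')) p
            + 2 * (f₁ p - f₇ p) * Dx (fun p' => p₁ p' * f p') p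
            - f p * p₁ p * (f₁ p - f₇ p) ^ 2
            + f p * p₁ p * Dx (fun p' => f₁ p' - f₇ p') p = 0)
        ∧ (I * Dt p₂ p + I * p₂ p * (g₁ p - g₁₃ p - I * v p - γ p)
            + Dx (Dx (fun p' => f p' * p₂ p')) p
            + 2 * (f₁ p - f₇ p) * Dx (fun p' => f p' * p₂ p') p
            + (f₁ p - f₇ p) ^ 2 * f p * p₂ p
            + f p * p₂ p * Dx (fun p' => f₁ p' - f₇ p') p = 0)
        ∧ (Dx f p * p₁ p * p₂ p + 2 * Dx (fun p' => f p' * p₁ p' * p₂ p') p = 0)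
        ∧ (g p + 2 * f p * p₁ p * p₂ p = 0)) := by
  have z : ContDiff ℝ (⊤ : ℕ∞) (fun _ : ℝ × ℝ => (0 : ℂ)) := contDiff_const
  have hIp₁ : ContDiff ℝ (⊤ : ℕ∞) (fun p => I * p₁ p) := contDiff_const.mul hp₁
  have hIp₂ : ContDiff ℝ (⊤ : ℕ∞) (fun p => -I * p₂ p) := contDiff_const.mul hp₂
  have hfp₁ := hf.mul hp₁
  have hfp₂ := hf.mul hp₂
  have hd := hf₁.sub hf₇
  -- derivatives of the matrix functions
  have e1 : Dt X₁ = fun p => !![Dt f₁ p, 0; 0, Dt f₇ p] := by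
    rw [hX₁, Dt_mat hf₁ z z hf₇, Dt_zero]
  have e0 : Dx X₀ = fun p => !![Dx g₁ p, 0; 0, Dx g₁₃ p] := by
    rw [hX₀, Dx_mat hg₁ z z hg₁₃, Dx_zero]
  have e2t : Dt X₂ = fun p => !![0, I * Dt p₁ p; 0, 0] := by
    rw [hX₂, Dt_mat z hIp₁ z z, Dt_zero, Dt_cmul _ hp₁]
  have e2x : Dx X₂ = fun p => !![0, I * Dx p₁ p; 0, 0] := by
    rw [hX₂, Dx_mat z hIp₁ z z, Dx_zero, Dx_cmul _ hp₁]
  have e3t : Dt X₃ = fun p => !![0, 0; -I * Dt p₂ p, 0] := by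
    rw [hX₃, Dt_mat z z hIp₂ z, Dt_zero, Dt_cmul _ hp₂]
  have e3x : Dx X₃ = fun p => !![0, 0; -I * Dx p₂ p, 0] := by
    rw [hX₃, Dx_mat z z hIp₂ z, Dx_zero, Dx_cmul _ hp₂]
  have e2xx : Dx (Dx (fun p' => f p' • X₂ p'))
      = fun p => !![0, I * Dx (Dx (fun p' => f p' * p₁ p')) p; 0, 0] := by
    have : (fun p' => f p' • X₂ p') = fun p => !![0, I * (f p * p₁ p); 0, 0] := by
      funext p; simp only [hX₂, smul_mat, mul_zero, mul_left_comm]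
    rw [this, Dx_mat z (contDiff_const.mul hfp₁) z z, Dx_zero, Dx_cmul _ hfp₁,
      Dx_mat z (contDiff_const.mul (Dx_smooth hfp₁)) z z, Dx_zero, Dx_cmul _ (Dx_smooth hfp₁)]
  have e3xx : Dx (Dx (fun p' => f p' • X₃ p'))
      = fun p => !![0, 0; -I * Dx (Dx (fun p' => f p' * p₂ p')) p, 0] := by
    have : (fun p' => f p' • X₃ p') = fun p => !![0, 0; -I * (f p * p₂ p), 0] := by
      funext p; simp only [hX₃, smul_mat, mul_zero, mul_left_comm]
    rw [this, Dx_mat z z (contDiff_const.mul hfp₂) z, Dx_zero, Dx_cmul _ hfp₂,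
      Dx_mat z z (contDiff_const.mul (Dx_smooth hfp₂)) z, Dx_zero, Dx_cmul _ (Dx_smooth hfp₂)]
  have e12 : Dx (fun p' => f p' • matComm (X₁ p') (X₂ p'))
      = fun p => !![0, I * ((f₁ p - f₇ p) * Dx (fun p' => f p' * p₁ p') p
          + (Dx f₁ p - Dx f₇ p) * (f p * p₁ p)); 0, 0] := by
    have : (fun p' => f p' • matComm (X₁ p') (X₂ p'))
        = fun p => !![0, I * ((f₁ p - f₇ p) * (f p * p₁ p)); 0, 0] := by
      funext p; simp only [hX₁, hX₂, comm_mat, smul_mat]; apply mat_congr <;> ring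
    rw [this, Dx_mat z (contDiff_const.mul (hd.mul hfp₁)) z z, Dx_zero, Dx_cmul _ (hd.mul hfp₁),
      Dx_mul_s11 hd hfp₁, Dx_sub_s11 hf₁ hf₇]
  have e13 : Dx (fun p' => f p' • matComm (X₁ p') (X₃ p'))
      = fun p => !![0, 0; I * ((f₁ p - f₇ p) * Dx (fun p' => f p' * p₂ p') p
          + (Dx f₁ p - Dx f₇ p) * (f p * p₂ p)), 0] := by
    have : (fun p' => f p' • matComm (X₁ p') (X₃ p'))
        = fun p => !![0, 0; I * ((f₁ p - f₇ p) * (f p * p₂ p)), 0] := by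
      funext p; simp only [hX₁, hX₃, comm_mat, smul_mat]; apply mat_congr <;> ring
    rw [this, Dx_mat z z (contDiff_const.mul (hd.mul hfp₂)) z, Dx_zero, Dx_cmul _ (hd.mul hfp₂),
      Dx_mul_s11 hd hfp₂, Dx_sub_s11 hf₁ hf₇]
  have hI : I * I = -1 := I_mul_I
  have e23 : Dx (fun p' => f p' • matComm (X₂ p') (X₃ p'))
      = fun p => !![Dx (fun p' => f p' * p₁ p' * p₂ p') p, 0;
          0, (-1) * Dx (fun p' => f p' * p₁ p' * p₂ p') p] := by
    have : (fun p' => f p' • matComm (X₂ p') (X₃ p'))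
        = fun p => !![f p * p₁ p * p₂ p, 0; 0, (-1) * (f p * p₁ p * p₂ p)] := by
      funext p; simp only [hX₂, hX₃, comm_mat, smul_mat]
      apply mat_congr
      · linear_combination (-f p * p₁ p * p₂ p) * hI
      · ring
      · ring
      · linear_combination (f p * p₁ p * p₂ p) * hI
    rw [this, Dx_mat (hfp₁.mul hp₂) z z (contDiff_const.mul (hfp₁.mul hp₂)), Dx_zero,
      Dx_cmul _ (hfp₁.mul hp₂)]
  have ed := Dx_sub_s11 hf₁ hf₇
  have ec : (fun p' => p₁ p' * f p') = fun p' => f p' * p₁ p' := by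
    funext p; ring
  have ef1 := Dx_mul_s11 hf hp₁
  have ef2 := Dx_mul_s11 hf hp₂
  have hI2 : I ^ 2 = -1 := I_sq
  have hI3 : I ^ 3 = -I := by rw [pow_succ, hI2]; ring
  have hI4 : I ^ 4 = 1 := I_pow_four
  simp only [← forall_and]
  refine forall_congr' fun p => ?_
  rw [e1, e0, e2t, e2x, e3t, e3x, e2xx, e3xx, e12, e13, e23, ed, ec]
  simp only [hX₀, hX₁, hX₂, hX₃, comm_mat, smul_mat, add_mat, sub_mat, mat_eq_zero]
  have ef1p := congrFun ef1 p
  have ef2p := congrFun ef2 p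
  generalize Dx (Dx (fun p' => f p' * p₁ p')) p = A1
  generalize Dx (Dx (fun p' => f p' * p₂ p')) p = A2
  generalize Dx (fun p' => f p' * p₁ p' * p₂ p') p = A3
  generalize Dx (fun p' => f p' * p₁ p') p = A4 at *
  generalize Dx (fun p' => f p' * p₂ p') p = A5 at *
  clear e1 e0 e2t e2x e3t e3x e2xx e3xx e12 e13 e23 ed ec ef1 ef2
  have hn1 := hp₁ne p
  have hn2 := hp₂ne p
  subst ef1p ef2p
  constructor
  · rintro ⟨⟨a1, -, -, a4⟩, ⟨-, b2, -, -⟩, ⟨-, -, c3, -⟩, ⟨d1, -, -, -⟩, -, -, ⟨-, k2, -, -⟩, -⟩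
    refine ⟨?_, ?_, ?_, ?_, ?_, ?_⟩
    · linear_combination a1
    · linear_combination a4
    · ring_nf at b2 ⊢
      simp only [hI2, hI3] at b2 ⊢
      linear_combination b2
    · ring_nf at c3 ⊢
      simp only [hI2, hI3] at c3 ⊢
      linear_combination -c3
    · ring_nf at d1 ⊢
      simp only [hI2, hI3] at d1 ⊢
      linear_combination -I * d1 + (Dx f p * p₁ p * p₂ p + 2 * A3) * hI
    · have : (I * p₁ p) * (g p + 2 * f p * p₁ p * p₂ p) = 0 := by
        ring_nf at k2 ⊢
        simp only [hI2, hI3] at k2 ⊢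
        linear_combination k2
      exact (mul_eq_zero.mp this).resolve_left (mul_ne_zero I_ne_zero hn1)
  · rintro ⟨a, b, c, d, e, k⟩
    refine ⟨⟨?_, ?_, ?_, ?_⟩, ⟨?_, ?_, ?_, ?_⟩, ⟨?_, ?_, ?_, ?_⟩, ⟨?_, ?_, ?_, ?_⟩,
      ⟨?_, ?_, ?_, ?_⟩, ⟨?_, ?_, ?_, ?_⟩, ⟨?_, ?_, ?_, ?_⟩, ⟨?_, ?_, ?_, ?_⟩⟩ <;> try (ring_nf; done)
    · linear_combination a
    · linear_combination b
    · ring_nf at c ⊢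
      simp only [hI2, hI3] at c ⊢
      linear_combination c
    · ring_nf at d ⊢
      simp only [hI2, hI3] at d ⊢
      linear_combination -d
    · ring_nf
      simp only [hI2, hI3]
      linear_combination I * e
    · ring_nf
      simp only [hI2, hI3]
      linear_combination -I * e
    · ring_nf
      simp only [hI2, hI3]
      linear_combination I * p₁ p * k
    · ring_nf
      simp only [hI2, hI3]
      linear_combination -I * p₂ p * k
end

section
/- Let a₁, f₁, f₂, f₃, f₄ : ℝ² → ℂ be continuously differentiable, and define X₁ = [[f₁, 0],[0, f₂]], X₂ = [[0, f₃],[0, 0]], X₃ = [[0, 0],[f₄, 0]] on ℝ². Then, at every point of ℝ², the matrix constraint −(a₁[X₂,X₃])ₓ + a₁[X₁,[X₂,X₃]] − [X₂,(a₁X₃)ₓ] + a₁[X₂,[X₁,X₃]] + [X₃,(a₁X₂)ₓ] − a₁[X₃,[X₁,X₂]] = 0 holds if and only if the scalar equation (a₁ f₃ f₄)ₓ + f₃ (a₁ f₄)ₓ + f₄ (a₁ f₃)ₓ = 0 holds. -/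
open Complex

attribute [local instance] Matrix.normedAddCommGroup Matrix.normedSpace

/-- The spatial derivative of a matrix-valued function is entrywise. -/
theorem Dx_matrix_entry (F : ℝ × ℝ → Matrix (Fin 2) (Fin 2) ℂ) (p : ℝ × ℝ)
    (h : ∀ i j, DifferentiableAt ℝ (fun q => F q i j) p) (i j : Fin 2) :
    Dx F p i j = Dx (fun q => F q i j) p := by
  have h1 : HasFDerivAt (𝕜 := ℝ) (E := ℝ × ℝ) (F := Fin 2 → Fin 2 → ℂ) F
      (ContinuousLinearMap.pi fun i => ContinuousLinearMap.pi fun j =>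
        fderiv ℝ (fun q => F q i j) p) p := by
    refine hasFDerivAt_pi.2 fun i => ?_
    exact hasFDerivAt_pi (φ := fun j q => F q i j).2 fun j => (h i j).hasFDerivAt
  have h2 := HasFDerivAt.fderiv h1
  exact congrFun (congrFun (congrArg (fun L : (ℝ × ℝ) →L[ℝ] (Fin 2 → Fin 2 → ℂ) => L (1, 0)) h2) i) j

theorem Dx_matrix (g₁ g₂ g₃ g₄ : ℝ × ℝ → ℂ) (p : ℝ × ℝ)
    (h₁ : DifferentiableAt ℝ g₁ p) (h₂ : DifferentiableAt ℝ g₂ p)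
    (h₃ : DifferentiableAt ℝ g₃ p) (h₄ : DifferentiableAt ℝ g₄ p) :
    Dx (fun q => !![g₁ q, g₂ q; g₃ q, g₄ q]) p
      = !![Dx g₁ p, Dx g₂ p; Dx g₃ p, Dx g₄ p] := by
  ext i j
  rw [Dx_matrix_entry]
  · fin_cases i <;> fin_cases j <;> rfl
  · intro i j
    fin_cases i <;> fin_cases j <;> assumption

/-- On the 2×2 ansatz `X₁ = diag(f₁,f₂)`, `X₂ = [[0,f₃],[0,0]]`, `X₃ = [[0,0],[f₄,0]]`,
the `O(qr)` matrix constraint of the extended Estabrook-Wahlquist analysis of the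
vcDNLS equation holds at a point iff the scalar equation
`(a₁ f₃ f₄)ₓ + f₃ (a₁ f₄)ₓ + f₄ (a₁ f₃)ₓ = 0` holds there. -/
theorem vcDNLS_Oqr_constraint (a₁ f₁ f₂ f₃ f₄ : ℝ × ℝ → ℂ)
    (ha₁ : ContDiff ℝ 1 a₁) (hf₁ : ContDiff ℝ 1 f₁) (hf₂ : ContDiff ℝ 1 f₂)
    (hf₃ : ContDiff ℝ 1 f₃) (hf₄ : ContDiff ℝ 1 f₄)
    (X₁ X₂ X₃ : ℝ × ℝ → Matrix (Fin 2) (Fin 2) ℂ)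
    (hX₁ : X₁ = fun p => !![f₁ p, 0; 0, f₂ p])
    (hX₂ : X₂ = fun p => !![0, f₃ p; 0, 0])
    (hX₃ : X₃ = fun p => !![0, 0; f₄ p, 0]) :
    ∀ p : ℝ × ℝ,
      (-Dx (fun p' => a₁ p' • matComm (X₂ p') (X₃ p')) p
          + a₁ p • matComm (X₁ p) (matComm (X₂ p) (X₃ p))
          - matComm (X₂ p) (Dx (fun p' => a₁ p' • X₃ p') p)
          + a₁ p • matComm (X₂ p) (matComm (X₁ p) (X₃ p))
          + matComm (X₃ p) (Dx (fun p' => a₁ p' • X₂ p') p)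
          - a₁ p • matComm (X₃ p) (matComm (X₁ p) (X₂ p)) = 0)
      ↔ (Dx (fun p' => a₁ p' * f₃ p' * f₄ p') p
          + f₃ p * Dx (fun p' => a₁ p' * f₄ p') p
          + f₄ p * Dx (fun p' => a₁ p' * f₃ p') p = 0) := by
  intro p
  subst hX₁ hX₂ hX₃
  have da : DifferentiableAt ℝ a₁ p := (ha₁.differentiable (by norm_num)) p
  have d3 : DifferentiableAt ℝ f₃ p := (hf₃.differentiable (by norm_num)) p
  have d4 : DifferentiableAt ℝ f₄ p := (hf₄.differentiable (by norm_num)) p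
  have d0 : DifferentiableAt ℝ (fun _ : ℝ × ℝ => (0 : ℂ)) p := differentiableAt_const _
  have z : Dx (fun _ : ℝ × ℝ => (0 : ℂ)) p = 0 := by simp [Dx]
  have n : Dx (fun q => -(a₁ q * f₃ q * f₄ q)) p = -Dx (fun q => a₁ q * f₃ q * f₄ q) p := by
    simp only [Dx]
    rw [fderiv_fun_neg]
    rfl
  have e1 : (fun q => a₁ q • matComm !![0, f₃ q; 0, 0] !![0, 0; f₄ q, 0])
      = fun q => !![a₁ q * f₃ q * f₄ q, 0; 0, -(a₁ q * f₃ q * f₄ q)] := by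
    funext q
    ext i j
    fin_cases i <;> fin_cases j <;> simp [matComm] <;> ring
  have e2 : (fun q => a₁ q • !![0, 0; f₄ q, 0]) = fun q => !![0, 0; a₁ q * f₄ q, 0] := by
    funext q
    ext i j
    fin_cases i <;> fin_cases j <;> simp
  have e3 : (fun q => a₁ q • !![0, f₃ q; 0, 0]) = fun q => !![0, a₁ q * f₃ q; 0, 0] := by
    funext q
    ext i j
    fin_cases i <;> fin_cases j <;> simp
  have k1 := Dx_matrix (fun q => a₁ q * f₃ q * f₄ q) (fun _ => 0) (fun _ => 0)
    (fun q => -(a₁ q * f₃ q * f₄ q)) p ((da.mul d3).mul d4) d0 d0 ((da.mul d3).mul d4).neg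
  have k2 := Dx_matrix (fun _ => 0) (fun _ => 0) (fun q => a₁ q * f₄ q) (fun _ => 0) p
    d0 d0 (da.mul d4) d0
  have k3 := Dx_matrix (fun _ => 0) (fun q => a₁ q * f₃ q) (fun _ => 0) (fun _ => 0) p
    d0 (da.mul d3) d0 d0
  rw [z, n] at k1
  rw [z] at k2 k3
  beta_reduce
  rw [e1, e2, e3, k1, k2, k3]
  generalize Dx (fun q => a₁ q * f₃ q * f₄ q) p = A
  generalize Dx (fun q => a₁ q * f₄ q) p = B
  generalize Dx (fun q => a₁ q * f₃ q) p = C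
  have key : ∀ M : Matrix (Fin 2) (Fin 2) ℂ,
      M = !![-(A + f₃ p * B + f₄ p * C), 0; 0, A + f₃ p * B + f₄ p * C] →
      (M = 0 ↔ A + f₃ p * B + f₄ p * C = 0) := by
    rintro M rfl
    constructor
    · intro h
      simpa using congrFun (congrFun h 1) 1
    · intro h
      rw [h]
      ext i j
      fin_cases i <;> fin_cases j <;> simp
  apply key
  ext i j
  fin_cases i <;> fin_cases j <;> simp [matComm] <;> ring
end

section
/- Let F₂ : ℝ → ℝ be smooth and nowhere zero, let F₃, F₄ : ℝ → ℝ be smooth, let c₁, c₂ ∈ ℝ, and let H₁, H₂ : ℝ → ℝ be antiderivatives satisfying H₁'(x) = x / F₂(x) and H₂'(x) = 1 / F₂(x) for all x. Define a₁(x,t) = F₄(t) F₂(x) (c₁ + c₂ x) − c₁ F₄(t) F₂(x) H₁(x) + c₁ x F₄(t) F₂(x) H₂(x) and a₂(x,t) = F₂(x) F₃(t). Then at every point of ℝ²: (i) a₂_t a₂ₓ − a₂ₓ_t a₂ = 0, and (ii) a₂³ a₁ₓₓₓ − 3 a₂² a₂ₓₓ a₁ₓ − 4 a₂ₓ³ a₁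 + 5 a₁ a₂ a₂ₓ a₂ₓₓ + 4 a₂ₓ² a₂ a₁ₓ − a₂² a₁ a₂ₓₓₓ − 2 a₂ₓ a₂² a₁ₓₓ = 0. -/
lemma hasF_prod {f g : ℝ → ℝ} {f' g' : ℝ} (p : ℝ × ℝ) (hf : HasDerivAt f f' p.1)
    (hg : HasDerivAt g g' p.2) :
    fderiv ℝ (fun p : ℝ × ℝ => f p.1 * g p.2) p (1, 0) = f' * g p.2 ∧
    fderiv ℝ (fun p : ℝ × ℝ => f p.1 * g p.2) p (0, 1) = f p.1 * g' := by
  have h1 : HasFDerivAt (fun p : ℝ × ℝ => f p.1) _ p :=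
    hf.hasFDerivAt.comp p (hasFDerivAt_fst (𝕜 := ℝ) (E := ℝ) (F := ℝ) (p := p))
  have h2 : HasFDerivAt (fun p : ℝ × ℝ => g p.2) _ p :=
    hg.hasFDerivAt.comp p (hasFDerivAt_snd (𝕜 := ℝ) (E := ℝ) (F := ℝ) (p := p))
  have h := (h1.mul h2).fderiv
  have e : ((fun p : ℝ × ℝ => f p.1) * fun p : ℝ × ℝ => g p.2)
      = fun p : ℝ × ℝ => f p.1 * g p.2 := rfl
  try rw [e] at h
  rw [h]
  constructor <;> simp <;> ring

lemma Dx_prod {f f' g : ℝ → ℝ} (hf : ∀ x, HasDerivAt f (f' x) x) (hg : Differentiable ℝ g) :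
    Dx (fun p : ℝ × ℝ => f p.1 * g p.2) = fun p => f' p.1 * g p.2 := by
  funext p
  exact (hasF_prod p (hf p.1) (hg p.2).hasDerivAt).1

lemma Dt_prod {f g g' : ℝ → ℝ} (hf : Differentiable ℝ f) (hg : ∀ x, HasDerivAt g (g' x) x) :
    Dt (fun p : ℝ × ℝ => f p.1 * g p.2) = fun p => f p.1 * g' p.2 := by
  funext p
  exact (hasF_prod p (hf p.1).hasDerivAt (hg p.2)).2

lemma smooth_deriv {f : ℝ → ℝ} (hf : ContDiff ℝ (⊤ : ℕ∞) f) :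
    (∀ x, HasDerivAt f (deriv f x) x) ∧ ContDiff ℝ (⊤ : ℕ∞) (deriv f) :=
  ⟨fun x => (hf.differentiable (by simp) x).hasDerivAt, (contDiff_infty_iff_deriv.1 hf).2⟩

/-- The explicit coefficients
`a₁ = F₄(t) F₂(x)(c₁ + c₂ x) − c₁ F₄(t) F₂(x) ∫ x/F₂ + c₁ x F₄(t) F₂(x) ∫ 1/F₂` and
`a₂ = F₂(x) F₃(t)` satisfy the two integrability conditions of the
variable-coefficient DNLS equation. -/
theorem vcDNLS_integrability_conditions (F₂ F₃ F₄ : ℝ → ℝ) (c₁ c₂ : ℝ)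
    (hF₂ : ContDiff ℝ (⊤ : ℕ∞) F₂) (hF₃ : ContDiff ℝ (⊤ : ℕ∞) F₃) (hF₄ : ContDiff ℝ (⊤ : ℕ∞) F₄)
    (hF₂ne : ∀ x : ℝ, F₂ x ≠ 0)
    (H₁ H₂ : ℝ → ℝ)
    (hH₁ : ∀ x : ℝ, HasDerivAt H₁ (x / F₂ x) x)
    (hH₂ : ∀ x : ℝ, HasDerivAt H₂ (1 / F₂ x) x)
    (a₁ a₂ : ℝ × ℝ → ℝ)
    (ha₁ : a₁ = fun p =>
      F₄ p.2 * F₂ p.1 * (c₁ + c₂ * p.1) - c₁ * F₄ p.2 * F₂ p.1 * H₁ p.1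
        + c₁ * p.1 * F₄ p.2 * F₂ p.1 * H₂ p.1)
    (ha₂ : a₂ = fun p => F₂ p.1 * F₃ p.2) :
    ∀ p : ℝ × ℝ,
      (Dt a₂ p * Dx a₂ p - Dt (Dx a₂) p * a₂ p = 0)
      ∧ ((a₂ p) ^ 3 * Dx (Dx (Dx a₁)) p
          - 3 * (a₂ p) ^ 2 * Dx (Dx a₂) p * Dx a₁ p
          - 4 * (Dx a₂ p) ^ 3 * a₁ p
          + 5 * a₁ p * a₂ p * Dx a₂ p * Dx (Dx a₂) p
          + 4 * (Dx a₂ p) ^ 2 * a₂ p * Dx a₁ p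
          - (a₂ p) ^ 2 * a₁ p * Dx (Dx (Dx a₂)) p
          - 2 * Dx a₂ p * (a₂ p) ^ 2 * Dx (Dx a₁) p = 0) := by
  obtain ⟨d0, s1⟩ := smooth_deriv hF₂
  obtain ⟨d1, s2⟩ := smooth_deriv s1
  obtain ⟨d2, s3⟩ := smooth_deriv s2
  have e3 := (smooth_deriv hF₃).1
  have D3 : Differentiable ℝ F₃ := fun x => (e3 x).differentiableAt
  have D4 : Differentiable ℝ F₄ := fun x => ((smooth_deriv hF₄).1 x).differentiableAt
  have D0 : Differentiable ℝ F₂ := fun x => (d0 x).differentiableAt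
  have D1 : Differentiable ℝ (deriv F₂) := fun x => (d1 x).differentiableAt
  set f := F₂ with hf
  set f1 := deriv f with hf1
  set f2 := deriv f1 with hf2
  set f3 := deriv f2 with hf3
  let G : ℝ → ℝ := fun x => c₁ + c₂ * x - c₁ * H₁ x + c₁ * (x * H₂ x)
  let G1 : ℝ → ℝ := fun x => c₂ + c₁ * H₂ x
  let G2 : ℝ → ℝ := fun x => c₁ * (f x)⁻¹
  let G3 : ℝ → ℝ := fun x => c₁ * (-f1 x / (f x) ^ 2)
  have g0 : ∀ x, HasDerivAt G (G1 x) x := fun x => by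
    have h := ((((hasDerivAt_id' x).const_mul c₂).const_add c₁).sub ((hH₁ x).const_mul c₁)).add
      (((hasDerivAt_id' x).mul (hH₂ x)).const_mul c₁)
    refine h.congr_deriv ?_
    simp only [G1]
    ring
  have g1 : ∀ x, HasDerivAt G1 (G2 x) x := fun x => by
    refine (((hH₂ x).const_mul c₁).const_add c₂).congr_deriv ?_
    simp only [G2]
    ring
  have g2 : ∀ x, HasDerivAt G2 (G3 x) x := fun x =>
    ((d0 x).inv (hF₂ne x)).const_mul c₁
  have A0 : ∀ x, HasDerivAt (fun x => f x * G x) (f1 x * G x + f x * G1 x) x :=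
    fun x => (d0 x).mul (g0 x)
  have A1 : ∀ x, HasDerivAt (fun x => f1 x * G x + f x * G1 x)
      ((f2 x * G x + f1 x * G1 x) + (f1 x * G1 x + f x * G2 x)) x :=
    fun x => ((d1 x).mul (g0 x)).add ((d0 x).mul (g1 x))
  have A2 : ∀ x, HasDerivAt
      (fun x => (f2 x * G x + f1 x * G1 x) + (f1 x * G1 x + f x * G2 x))
      (((f3 x * G x + f2 x * G1 x) + (f2 x * G1 x + f1 x * G2 x)) +
        ((f2 x * G1 x + f1 x * G2 x) + (f1 x * G2 x + f x * G3 x))) x :=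
    fun x => (((d2 x).mul (g0 x)).add ((d1 x).mul (g1 x))).add
      (((d1 x).mul (g1 x)).add ((d0 x).mul (g2 x)))
  have ha : a₁ = fun p => (fun x => f x * G x) p.1 * F₄ p.2 := by
    rw [ha₁]
    funext p
    simp only [G]
    ring
  have X1 := Dx_prod A0 D4
  have X2 := Dx_prod A1 D4
  have X3 := Dx_prod A2 D4
  have Y1 := Dx_prod d0 D3
  have Y2 := Dx_prod d1 D3
  have Y3 := Dx_prod d2 D3
  have T0 := Dt_prod D0 e3
  have T1 := Dt_prod D1 e3
  intro p
  rw [ha, ha₂, X1, X2, X3, Y1, Y2, Y3, T0, T1]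
  have hne := hF₂ne p.1
  constructor
  · ring
  · simp only [G2, G3]
    generalize G p.1 = u
    generalize G1 p.1 = v
    field_simp
    ring
end

section
/- Let g : ℝ² → ℝ be smooth and nowhere zero, let v : ℝ² → ℝ be smooth, let c₁, c₂ : ℝ → ℝ be smooth with c₁ and c₂ nowhere zero, and define f(x,t) = c₁(t) / g(x,t)² and γ(x,t) = g_t(x,t)/g(x,t) − (1/2) c₂'(t)/c₂(t). Suppose that at every point of ℝ² the condition f g³ (f_t (g_t − 2 g γ) − f_tt g) + f_t² g⁴ + 2 f³ g³ (g v_xx − gₓ vₓ) + f² g² (g (4 g_t γ + g_tt) − 2 g_t² − 2 g² (γ_t + 2 γ²)) + f⁴ (36 gₓ⁴ − 48 g g_xx gₓ² + 10 g² g_xxx gₓ + g² (6 g_xx² − g g_xxxx)) = 0 holds. Then there exist smooth functions p₁, p₂, f₁, f₇, g₁, g₁₃ : ℝ² → ℂ satisfying, at every point of ℝ²: (KC1) f₁_t − g₁ₓ = 0; (KC2) f₇_t − g₁₃ₓ = 0; (KC3) i p₁_t − i p₁(g₁ − g₁₃ − i v + γ) − (f p₁)_xx + 2(f₁ − f₇)(p₁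 f)ₓ − f p₁(f₁ − f₇)² + f p₁(f₁ − f₇)ₓ = 0; (KC4) i p₂_t + i p₂(g₁ − g₁₃ − i v − γ) + (f p₂)_xx + 2(f₁ − f₇)(f p₂)ₓ + (f₁ − f₇)² f p₂ + f p₂(f₁ − f₇)ₓ = 0; (KC5) fₓ p₁ p₂ + 2(f p₁ p₂)ₓ = 0; (KC6) g + 2 f p₁ p₂ = 0. Consequently the variable-coefficient NLS equation i q_t + f q_xx + g |q|² q + v q + i γ q = 0 with these coefficients is Lax-integrable. -/
open Complex

set_option linter.unusedSimpArgs false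

section Rules

variable {E : Type*} [NormedAddCommGroup E] [NormedSpace ℝ E]
variable {A : Type*} [NormedCommRing A] [NormedAlgebra ℝ A]

@[fun_prop]
theorem contDiff_Dx {F : ℝ × ℝ → E} (hF : ContDiff ℝ (⊤ : ℕ∞) F) :
    ContDiff ℝ (⊤ : ℕ∞) (Dx F) := by
  unfold Dx
  exact (hF.fderiv_right (m := (⊤ : ℕ∞)) (by simp)).clm_apply contDiff_const

@[fun_prop]
theorem contDiff_Dt {F : ℝ × ℝ → E} (hF : ContDiff ℝ (⊤ : ℕ∞) F) :
    ContDiff ℝ (⊤ : ℕ∞) (Dt F) := by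
  unfold Dt
  exact (hF.fderiv_right (m := (⊤ : ℕ∞)) (by simp)).clm_apply contDiff_const

theorem smooth_diffAt {F : ℝ × ℝ → E} (hF : ContDiff ℝ (⊤ : ℕ∞) F) (p : ℝ × ℝ) :
    DifferentiableAt ℝ F p := hF.differentiable (by simp) p

theorem Dx_add_s19 {F G : ℝ × ℝ → E} (hF : ContDiff ℝ (⊤ : ℕ∞) F) (hG : ContDiff ℝ (⊤ : ℕ∞) G) :
    Dx (fun p => F p + G p) = fun p => Dx F p + Dx G p := by
  funext p
  simp [Dx, fderiv_fun_add (smooth_diffAt hF p) (smooth_diffAt hG p)]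

theorem Dt_add_s19 {F G : ℝ × ℝ → E} (hF : ContDiff ℝ (⊤ : ℕ∞) F) (hG : ContDiff ℝ (⊤ : ℕ∞) G) :
    Dt (fun p => F p + G p) = fun p => Dt F p + Dt G p := by
  funext p
  simp [Dt, fderiv_fun_add (smooth_diffAt hF p) (smooth_diffAt hG p)]

theorem Dx_sub_s19 {F G : ℝ × ℝ → E} (hF : ContDiff ℝ (⊤ : ℕ∞) F) (hG : ContDiff ℝ (⊤ : ℕ∞) G) :
    Dx (fun p => F p - G p) = fun p => Dx F p - Dx G p := by
  funext p
  simp [Dx, fderiv_fun_sub (smooth_diffAt hF p) (smooth_diffAt hG p)]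

theorem Dt_sub {F G : ℝ × ℝ → E} (hF : ContDiff ℝ (⊤ : ℕ∞) F) (hG : ContDiff ℝ (⊤ : ℕ∞) G) :
    Dt (fun p => F p - G p) = fun p => Dt F p - Dt G p := by
  funext p
  simp [Dt, fderiv_fun_sub (smooth_diffAt hF p) (smooth_diffAt hG p)]

theorem Dx_neg {F : ℝ × ℝ → E} : Dx (fun p => -F p) = fun p => -Dx F p := by
  funext p
  simp [Dx, fderiv_fun_neg]

theorem Dt_neg {F : ℝ × ℝ → E} : Dt (fun p => -F p) = fun p => -Dt F p := by
  funext p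
  simp [Dt, fderiv_fun_neg]

theorem Dx_const (c : E) : Dx (fun _ => c) = fun _ => 0 := by
  funext p
  simp [Dx]

theorem Dt_const (c : E) : Dt (fun _ => c) = fun _ => 0 := by
  funext p
  simp [Dt]

theorem Dx_mul_s19 {F G : ℝ × ℝ → A} (hF : ContDiff ℝ (⊤ : ℕ∞) F) (hG : ContDiff ℝ (⊤ : ℕ∞) G) :
    Dx (fun p => F p * G p) = fun p => F p * Dx G p + G p * Dx F p := by
  funext p
  simp [Dx, fderiv_fun_mul (smooth_diffAt hF p) (smooth_diffAt hG p)]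

theorem Dt_mul {F G : ℝ × ℝ → A} (hF : ContDiff ℝ (⊤ : ℕ∞) F) (hG : ContDiff ℝ (⊤ : ℕ∞) G) :
    Dt (fun p => F p * G p) = fun p => F p * Dt G p + G p * Dt F p := by
  funext p
  simp [Dt, fderiv_fun_mul (smooth_diffAt hF p) (smooth_diffAt hG p)]

theorem Dx_ofReal {F : ℝ × ℝ → ℝ} (hF : ContDiff ℝ (⊤ : ℕ∞) F) :
    Dx (fun p => (F p : ℂ)) = fun p => Complex.ofReal (Dx F p) := by
  funext p
  have h := (Complex.ofRealCLM.hasFDerivAt (x := F p)).comp p (smooth_diffAt hF p).hasFDerivAt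
  have h2 : HasFDerivAt (fun p => (F p : ℂ)) (Complex.ofRealCLM.comp (fderiv ℝ F p)) p := h
  simp [Dx, h2.fderiv]

theorem Dt_ofReal {F : ℝ × ℝ → ℝ} (hF : ContDiff ℝ (⊤ : ℕ∞) F) :
    Dt (fun p => (F p : ℂ)) = fun p => Complex.ofReal (Dt F p) := by
  funext p
  have h := (Complex.ofRealCLM.hasFDerivAt (x := F p)).comp p (smooth_diffAt hF p).hasFDerivAt
  have h2 : HasFDerivAt (fun p => (F p : ℂ)) (Complex.ofRealCLM.comp (fderiv ℝ F p)) p := h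
  simp [Dt, h2.fderiv]

@[fun_prop]
theorem contDiff_ofReal_fun {F : ℝ × ℝ → ℝ} (hF : ContDiff ℝ (⊤ : ℕ∞) F) :
    ContDiff ℝ (⊤ : ℕ∞) (fun p => (F p : ℂ)) :=
  Complex.ofRealCLM.contDiff.comp hF

theorem Dx_snd {c : ℝ → ℝ} (hc : ContDiff ℝ (⊤ : ℕ∞) c) :
    Dx (fun p : ℝ × ℝ => c p.2) = fun _ => 0 := by
  funext p
  have h : HasFDerivAt (fun p : ℝ × ℝ => c p.2)
      ((fderiv ℝ c p.2).comp (ContinuousLinearMap.snd ℝ ℝ ℝ)) p :=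
    ((hc.differentiable (by simp) p.2).hasFDerivAt).comp p hasFDerivAt_snd
  simp [Dx, h.fderiv]

theorem Dt_snd {c : ℝ → ℝ} (hc : ContDiff ℝ (⊤ : ℕ∞) c) :
    Dt (fun p : ℝ × ℝ => c p.2) = fun p => deriv c p.2 := by
  funext p
  have h : HasFDerivAt (fun p : ℝ × ℝ => c p.2)
      ((fderiv ℝ c p.2).comp (ContinuousLinearMap.snd ℝ ℝ ℝ)) p :=
    ((hc.differentiable (by simp) p.2).hasFDerivAt).comp p hasFDerivAt_snd
  simp [Dt, h.fderiv]

theorem fderiv_inv_smooth {F n : ℝ × ℝ → ℝ} (hF : ContDiff ℝ (⊤ : ℕ∞) F)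
    (hn : ContDiff ℝ (⊤ : ℕ∞) n) (h : ∀ p, F p * n p = 1) :
    Dx n = (fun p => -(n p * n p * Dx F p)) ∧ Dt n = (fun p => -(n p * n p * Dt F p)) := by
  have h0 : (fun p => F p * n p) = fun _ => 1 := funext h
  constructor
  · have h1 := Dx_mul_s19 hF hn
    rw [h0, Dx_const] at h1
    funext p
    have h2 := congrFun h1 p
    linear_combination (-n p) * h2 - Dx n p * h p
  · have h1 := Dt_mul hF hn
    rw [h0, Dt_const] at h1
    funext p
    have h2 := congrFun h1 p
    linear_combination (-n p) * h2 - Dt n p * h p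

theorem Dt_Dx_comm {F : ℝ × ℝ → ℝ} (hF : ContDiff ℝ (⊤ : ℕ∞) F) (p : ℝ × ℝ) :
    Dt (Dx F) p = Dx (Dt F) p := by
  have hd : DifferentiableAt ℝ (fderiv ℝ F) p :=
    (hF.fderiv_right (m := (⊤ : ℕ∞)) (by simp)).differentiable (by simp) p
  have key : ∀ u w : ℝ × ℝ, fderiv ℝ (fun q => fderiv ℝ F q u) p w = fderiv ℝ (fderiv ℝ F) p w u := by
    intro u w
    have := (hd.hasFDerivAt.clm_apply (hasFDerivAt_const u p)).fderiv
    rw [this]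
    simp
  have hs := (hF.contDiffAt (x := p)).isSymmSndFDerivAt
    (by simpa using (WithTop.coe_le_coe.2 le_top : ((2 : ℕ∞) : WithTop ℕ∞) ≤ ((⊤ : ℕ∞) : WithTop ℕ∞)))
  unfold Dx Dt
  rw [key, key]
  exact hs _ _

theorem exists_potential {P Q : ℝ × ℝ → ℝ} (hP : ContDiff ℝ (⊤ : ℕ∞) P)
    (hQ : ContDiff ℝ (⊤ : ℕ∞) Q) (h : ∀ p, Dt P p = Dx Q p) :
    ∃ W : ℝ × ℝ → ℝ, ContDiff ℝ (⊤ : ℕ∞) W ∧ Dx W = P ∧ Dt W = Q := by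
  let om : ℝ × ℝ → (ℝ × ℝ →L[ℝ] ℝ) := fun p =>
    P p • ContinuousLinearMap.fst ℝ ℝ ℝ + Q p • ContinuousLinearMap.snd ℝ ℝ ℝ
  have hom : ContDiff ℝ (⊤ : ℕ∞) om := by
    exact (hP.smul contDiff_const).add (hQ.smul contDiff_const)
  have hd : ∀ p, HasFDerivAt om
      ((fderiv ℝ P p).smulRight (ContinuousLinearMap.fst ℝ ℝ ℝ)
        + (fderiv ℝ Q p).smulRight (ContinuousLinearMap.snd ℝ ℝ ℝ)) p := fun p =>
    ((smooth_diffAt hP p).hasFDerivAt.smul_const (ContinuousLinearMap.fst ℝ ℝ ℝ)).add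
      ((smooth_diffAt hQ p).hasFDerivAt.smul_const (ContinuousLinearMap.snd ℝ ℝ ℝ))
  have hlin : ∀ (L : ℝ × ℝ →L[ℝ] ℝ) (u : ℝ × ℝ), L u = u.1 * L (1, 0) + u.2 * L (0, 1) := by
    intro L u
    have : u = u.1 • ((1 : ℝ), (0 : ℝ)) + u.2 • ((0 : ℝ), (1 : ℝ)) := by
      ext <;> simp
    conv_lhs => rw [this]
    simp only [map_add, map_smul, smul_eq_mul]
  obtain ⟨W, hW⟩ := (convex_univ (𝕜 := ℝ) (E := ℝ × ℝ)).exists_forall_hasFDerivAt_of_fderiv_symmetric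
    isOpen_univ (ω := om) (fun p _ => (hd p).differentiableAt.differentiableWithinAt) (by
      intro p _ u w
      have hp := h p
      unfold Dt Dx at hp
      rw [(hd p).fderiv]
      simp only [ContinuousLinearMap.add_apply, ContinuousLinearMap.smulRight_apply,
        ContinuousLinearMap.smul_apply, ContinuousLinearMap.coe_fst', ContinuousLinearMap.coe_snd',
        smul_eq_mul]
      rw [hlin (fderiv ℝ P p) u, hlin (fderiv ℝ P p) w, hlin (fderiv ℝ Q p) u,
        hlin (fderiv ℝ Q p) w]
      linear_combination (u.2 * w.1 - w.2 * u.1) * hp)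
  have hf : fderiv ℝ W = om := funext fun p => (hW p (Set.mem_univ p)).fderiv
  refine ⟨W, ?_, ?_, ?_⟩
  · apply contDiff_infty_iff_fderiv.2
    exact ⟨fun p => (hW p (Set.mem_univ p)).differentiableAt, by rw [hf]; exact hom⟩
  · funext p
    simp [Dx, hf, om]
  · funext p
    simp [Dt, hf, om]

end Rules

/-- If the coefficients `f = c₁(t)/g²` and `γ = g_t/g − (1/2) c₂'(t)/c₂(t)` satisfy
the stated integrability condition, then the determining equations (KC1)-(KC6) for a
Lax pair of the variable-coefficient NLS equation
`i q_t + f q_xx + g |q|² q + v q + i γ q = 0` admit smooth solutions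
`p₁, p₂, f₁, f₇, g₁, g₁₃`, i.e. the equation is Lax-integrable. -/
theorem vcNLS_lax_integrable (g v : ℝ × ℝ → ℝ) (c₁ c₂ : ℝ → ℝ)
    (hg : ContDiff ℝ (⊤ : ℕ∞) g) (hv : ContDiff ℝ (⊤ : ℕ∞) v)
    (hc₁ : ContDiff ℝ (⊤ : ℕ∞) c₁) (hc₂ : ContDiff ℝ (⊤ : ℕ∞) c₂)
    (hgne : ∀ p : ℝ × ℝ, g p ≠ 0)
    (hc₁ne : ∀ t : ℝ, c₁ t ≠ 0) (hc₂ne : ∀ t : ℝ, c₂ t ≠ 0)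
    (f γ : ℝ × ℝ → ℝ)
    (hf : f = fun p => c₁ p.2 / (g p) ^ 2)
    (hγ : γ = fun p => Dt g p / g p - (1 / 2) * deriv c₂ p.2 / c₂ p.2)
    (hcond : ∀ p : ℝ × ℝ,
      f p * (g p) ^ 3 * (Dt f p * (Dt g p - 2 * g p * γ p) - Dt (Dt f) p * g p)
        + (Dt f p) ^ 2 * (g p) ^ 4
        + 2 * (f p) ^ 3 * (g p) ^ 3 * (g p * Dx (Dx v) p - Dx g p * Dx v p)
        + (f p) ^ 2 * (g p) ^ 2
            * (g p * (4 * Dt g p * γ p + Dt (Dt g) p) - 2 * (Dt g p) ^ 2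
              - 2 * (g p) ^ 2 * (Dt γ p + 2 * (γ p) ^ 2))
        + (f p) ^ 4
            * (36 * (Dx g p) ^ 4 - 48 * g p * Dx (Dx g) p * (Dx g p) ^ 2
              + 10 * (g p) ^ 2 * Dx (Dx (Dx g)) p * Dx g p
              + (g p) ^ 2 * (6 * (Dx (Dx g) p) ^ 2 - g p * Dx (Dx (Dx (Dx g))) p))
        = 0) :
    ∃ p₁ p₂ f₁ f₇ g₁ g₁₃ : ℝ × ℝ → ℂ,
      ContDiff ℝ (⊤ : ℕ∞) p₁ ∧ ContDiff ℝ (⊤ : ℕ∞) p₂ ∧ ContDiff ℝ (⊤ : ℕ∞) f₁ ∧ ContDiff ℝ (⊤ : ℕ∞) f₇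
      ∧ ContDiff ℝ (⊤ : ℕ∞) g₁ ∧ ContDiff ℝ (⊤ : ℕ∞) g₁₃
      ∧ ∀ p : ℝ × ℝ,
          (Dt f₁ p - Dx g₁ p = 0)
          ∧ (Dt f₇ p - Dx g₁₃ p = 0)
          ∧ (I * Dt p₁ p
              - I * p₁ p * (g₁ p - g₁₃ p - I * (v p : ℂ) + (γ p : ℂ))
              - Dx (Dx (fun p' => (f p' : ℂ) * p₁ p')) p
              + 2 * (f₁ p - f₇ p) * Dx (fun p' => p₁ p' * (f p' : ℂ)) p
              - (f p : ℂ) * p₁ p * (f₁ p - f₇ p) ^ 2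
              + (f p : ℂ) * p₁ p * Dx (fun p' => f₁ p' - f₇ p') p = 0)
          ∧ (I * Dt p₂ p
              + I * p₂ p * (g₁ p - g₁₃ p - I * (v p : ℂ) - (γ p : ℂ))
              + Dx (Dx (fun p' => (f p' : ℂ) * p₂ p')) p
              + 2 * (f₁ p - f₇ p) * Dx (fun p' => (f p' : ℂ) * p₂ p') p
              + (f₁ p - f₇ p) ^ 2 * (f p : ℂ) * p₂ p
              + (f p : ℂ) * p₂ p * Dx (fun p' => f₁ p' - f₇ p') p = 0)
          ∧ ((Complex.ofReal (Dx f p)) * p₁ p * p₂ p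
              + 2 * Dx (fun p' => (f p' : ℂ) * p₁ p' * p₂ p') p = 0)
          ∧ ((g p : ℂ) + 2 * (f p : ℂ) * p₁ p * p₂ p = 0) := by
  -- auxiliary smooth functions: inverses and time-dependent coefficients
  obtain ⟨n, hn_def⟩ : ∃ n : ℝ × ℝ → ℝ, n = fun p => (g p)⁻¹ := ⟨_, rfl⟩
  obtain ⟨k, hk_def⟩ : ∃ k : ℝ × ℝ → ℝ, k = fun p => c₁ p.2 := ⟨_, rfl⟩
  obtain ⟨m, hm_def⟩ : ∃ m : ℝ × ℝ → ℝ, m = fun p => (c₁ p.2)⁻¹ := ⟨_, rfl⟩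
  obtain ⟨e, he_def⟩ : ∃ e : ℝ × ℝ → ℝ, e = fun p => c₂ p.2 := ⟨_, rfl⟩
  obtain ⟨d, hd_def⟩ : ∃ d : ℝ × ℝ → ℝ, d = fun p => (c₂ p.2)⁻¹ := ⟨_, rfl⟩
  have hk : ContDiff ℝ (⊤ : ℕ∞) k := by rw [hk_def]; exact hc₁.comp contDiff_snd
  have he : ContDiff ℝ (⊤ : ℕ∞) e := by rw [he_def]; exact hc₂.comp contDiff_snd
  have hn : ContDiff ℝ (⊤ : ℕ∞) n := by rw [hn_def]; exact hg.inv hgne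
  have hm : ContDiff ℝ (⊤ : ℕ∞) m := by
    rw [hm_def]; exact (hc₁.comp contDiff_snd).inv (fun p => hc₁ne p.2)
  have hd : ContDiff ℝ (⊤ : ℕ∞) d := by
    rw [hd_def]; exact (hc₂.comp contDiff_snd).inv (fun p => hc₂ne p.2)
  have hkne : ∀ p, k p ≠ 0 := by intro p; rw [hk_def]; exact hc₁ne p.2
  have hene : ∀ p, e p ≠ 0 := by intro p; rw [he_def]; exact hc₂ne p.2
  have hn' : ∀ p, n p = (g p)⁻¹ := by intro p; rw [hn_def]
  have hm' : ∀ p, m p = (k p)⁻¹ := by intro p; rw [hm_def, hk_def]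
  have hd' : ∀ p, d p = (e p)⁻¹ := by intro p; rw [hd_def, he_def]
  obtain ⟨nx, nt⟩ := fderiv_inv_smooth hg hn (fun p => by rw [hn']; exact mul_inv_cancel₀ (hgne p))
  obtain ⟨mx, mt⟩ := fderiv_inv_smooth hk hm (fun p => by rw [hm']; exact mul_inv_cancel₀ (hkne p))
  obtain ⟨dx, dt⟩ := fderiv_inv_smooth he hd (fun p => by rw [hd']; exact mul_inv_cancel₀ (hene p))
  have kx : Dx k = fun _ => 0 := by rw [hk_def]; exact Dx_snd hc₁
  have ex : Dx e = fun _ => 0 := by rw [he_def]; exact Dx_snd hc₂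
  have hc₁' : ContDiff ℝ (⊤ : ℕ∞) (deriv c₁) := (contDiff_infty_iff_deriv.1 hc₁).2
  have hc₂' : ContDiff ℝ (⊤ : ℕ∞) (deriv c₂) := (contDiff_infty_iff_deriv.1 hc₂).2
  have ktx : Dx (Dt k) = fun _ => 0 := by rw [hk_def, Dt_snd hc₁]; exact Dx_snd hc₁'
  have etx : Dx (Dt e) = fun _ => 0 := by rw [he_def, Dt_snd hc₂]; exact Dx_snd hc₂'
  have hf' : f = fun p => k p * (n p * n p) := by
    rw [hf]; funext p; rw [hn', hk_def]; have := hgne p; field_simp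
  have hγ' : γ = fun p => Dt g p * n p - (1 / 2) * (Dt e p * d p) := by
    rw [hγ]; funext p
    rw [hn', hd', he_def, Dt_snd hc₂]; simp only [div_eq_mul_inv]; ring
  clear hf hγ hn_def hk_def hm_def he_def hd_def
  -- the one-form
  obtain ⟨S, hS⟩ : ∃ S : ℝ × ℝ → ℝ, S = fun p => k p * ((3 / 4) * (Dx g p * Dx g p * (n p * n p * (n p * n p)))
    - (1 / 2) * (Dx (Dx g) p * (n p * n p * n p))) := ⟨_, rfl⟩
  have hSs : ContDiff ℝ (⊤ : ℕ∞) S := by rw [hS]; fun_prop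
  have Sx : Dx S = fun p => k p * (3 * (Dx g p * Dx (Dx g) p * (n p * n p * (n p * n p)))
      - 3 * (Dx g p * Dx g p * Dx g p * (n p * n p * (n p * n p * n p)))
      - (1 / 2) * (Dx (Dx (Dx g)) p * (n p * n p * n p))) := by
    rw [hS]
    simp (disch := fun_prop) only [Dx_mul_s19, Dx_add_s19, Dx_sub_s19, Dx_neg, Dx_const, kx, nx]
    funext p
    ring
  obtain ⟨P, hP⟩ : ∃ P : ℝ × ℝ → ℝ, P = fun p => (1 / 2) * (d p * (Dt g p - (Dt k p * m p - Dt e p * d p) * g p)) :=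
    ⟨_, rfl⟩
  obtain ⟨Q, hQ⟩ : ∃ Q : ℝ × ℝ → ℝ, Q = fun p => -(k p * d p * n p * (Dx v p + Dx S p)) :=
    ⟨_, rfl⟩
  have hPs : ContDiff ℝ (⊤ : ℕ∞) P := by rw [hP]; fun_prop
  have hQs : ContDiff ℝ (⊤ : ℕ∞) Q := by rw [hQ]; fun_prop
  have hPQ : ∀ p, Dt P p = Dx Q p := by
    intro p
    have h := hcond p
    rw [hQ, Sx, hP]
    rw [hf', hγ'] at h
    simp (disch := fun_prop) only [Dx_mul_s19, Dx_add_s19, Dx_sub_s19, Dx_neg, Dx_const, kx, nx, mx, dx, ex,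
      Dt_mul, Dt_add_s19, Dt_sub, Dt_neg, Dt_const, nt, mt, dt] at h ⊢
    have hg0 := hgne p
    have hk0 := hkne p
    have he0 := hene p
    simp only [hn', hm', hd'] at h ⊢
    have hfac : g p / (2 * k p ^ 2 * e p) ≠ 0 := by positivity
    rw [← sub_eq_zero]
    refine Eq.trans ?_ ((congrArg (fun z => g p / (2 * k p ^ 2 * e p) * z) h).trans (mul_zero _))
    field_simp
    ring
  obtain ⟨W, hWs, Wx, Wt⟩ := exists_potential hPs hQs hPQ
  obtain ⟨aI, haI⟩ : ∃ aI : ℝ × ℝ → ℝ, aI = fun p => -(m p * g p * (e p * W p)) := ⟨_, rfl⟩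
  obtain ⟨aR, haR⟩ : ∃ aR : ℝ × ℝ → ℝ, aR = fun p => (1 / 2) * (Dx g p * n p) := ⟨_, rfl⟩
  obtain ⟨bR, hbR⟩ : ∃ bR : ℝ × ℝ → ℝ, bR = fun p => (1 / 2) * (Dt g p * n p) - (1 / 2) * (Dt k p * m p) :=
    ⟨_, rfl⟩
  obtain ⟨bI, hbI⟩ : ∃ bI : ℝ × ℝ → ℝ, bI = fun p => v p + S p - m p * (e p * W p * (e p * W p)) :=
    ⟨_, rfl⟩
  have haIs : ContDiff ℝ (⊤ : ℕ∞) aI := by rw [haI]; fun_prop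
  have haRs : ContDiff ℝ (⊤ : ℕ∞) aR := by rw [haR]; fun_prop
  have hbIs : ContDiff ℝ (⊤ : ℕ∞) bI := by rw [hbI]; fun_prop
  have hbRs : ContDiff ℝ (⊤ : ℕ∞) bR := by rw [hbR]; fun_prop
  have e1 : ∀ p, Dt aR p = Dx bR p := by
    intro p
    rw [haR, hbR]
    simp (disch := fun_prop) only [Dx_mul_s19, Dx_sub_s19, Dx_const, kx, nx, mx, ktx,
      Dt_mul, Dt_const, nt, Dt_Dx_comm hg]
    ring
  have e2 : ∀ p, Dt aI p = Dx bI p := by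
    intro p
    rw [haI, hbI]
    simp (disch := fun_prop) only [Dx_mul_s19, Dx_sub_s19, Dx_add_s19, Dx_const, kx, nx, mx, ex,
      Dt_mul, Dt_neg, Dt_const, nt, mt, Wx, Wt, hP, hQ]
    have hg0 := hgne p
    have hk0 := hkne p
    have he0 := hene p
    simp only [hn', hm', hd']
    field_simp
    ring
  have aRx : Dx aR = fun p => (1 / 2) * (Dx (Dx g) p * n p - Dx g p * Dx g p * (n p * n p)) := by
    rw [haR]
    simp (disch := fun_prop) only [Dx_mul_s19, Dx_const, nx]
    funext p
    ring
  have aIx : Dx aI = fun p => -(m p * Dx g p * (e p * W p)) - (1 / 2) * (m p * g p * (e p * (d p * (Dt g p - (Dt k p * m p - Dt e p * d p) * g p)))) := by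
    rw [haI]
    simp (disch := fun_prop) only [Dx_mul_s19, Dx_neg, ex, mx, kx, Wx, hP]
    funext p
    ring
  have hfs : ContDiff ℝ (⊤ : ℕ∞) f := by rw [hf']; fun_prop
  have fp1 : (fun p => (f p : ℂ) * ((m p * (g p * g p) : ℝ) : ℂ)) = fun _ => 1 := by
    funext p
    have hg0 := hgne p
    have hk0 := hkne p
    rw [← Complex.ofReal_mul, hf', hm']
    simp only [hn']
    rw [← Complex.ofReal_one]
    congr 1
    field_simp
  have fp1' : (fun p => ((m p * (g p * g p) : ℝ) : ℂ) * (f p : ℂ)) = fun _ => 1 := by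
    rw [← fp1]; funext p; ring
  have fp2 : (fun p => (f p : ℂ) * ((-(1 / 2) * g p : ℝ) : ℂ))
      = fun p => ((-(1 / 2) * (k p * n p) : ℝ) : ℂ) := by
    funext p
    have hg0 := hgne p
    rw [← Complex.ofReal_mul, hf']
    congr 1
    simp only [hn']
    field_simp
  have fp12 : (fun p => (f p : ℂ) * ((m p * (g p * g p) : ℝ) : ℂ) * ((-(1 / 2) * g p : ℝ) : ℂ))
      = fun p => ((-(1 / 2) * g p : ℝ) : ℂ) := by
    funext p
    rw [congrFun fp1 p, one_mul]
  refine ⟨fun p => ((m p * (g p * g p) : ℝ) : ℂ), fun p => ((-(1 / 2) * g p : ℝ) : ℂ),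
    fun p => (aR p : ℂ) + I * (aI p : ℂ), fun _ => 0,
    fun p => (bR p : ℂ) + I * (bI p : ℂ), fun _ => 0,
    by fun_prop, by fun_prop, by fun_prop, by fun_prop, by fun_prop, by fun_prop, ?_⟩
  intro p
  have hg0 := hgne p
  have hk0 := hkne p
  have he0 := hene p
  refine ⟨?_, ?_, ?_, ?_, ?_, ?_⟩
  · simp (disch := fun_prop) only [Dx_mul_s19, Dx_add_s19, Dx_const, Dt_mul, Dt_add_s19, Dt_const, Dx_ofReal,
      Dt_ofReal, e1, e2]
    ring
  · simp only [Dx_const, Dt_const, sub_zero]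
  · rw [fp1, fp1']
    simp (disch := fun_prop) only [Dx_mul_s19, Dx_add_s19, Dx_sub_s19, Dx_const, Dt_mul, Dx_ofReal,
      Dt_ofReal, mt, aRx, aIx]
    simp only [haR, haI, hbR, hbI, hS, hf', hγ', hn', hm', hd']
    push_cast
    have hg1 : (g p : ℂ) ≠ 0 := by exact_mod_cast hg0
    have hk1 : (k p : ℂ) ≠ 0 := by exact_mod_cast hk0
    have he1 : (e p : ℂ) ≠ 0 := by exact_mod_cast he0
    field_simp
    ring_nf
    simp only [I_sq, I_pow_three]
    ring
  · rw [fp2]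
    simp (disch := fun_prop) only [Dx_mul_s19, Dx_add_s19, Dx_sub_s19, Dx_neg, Dx_const, Dt_mul, Dt_const, Dx_ofReal,
      Dt_ofReal, mt, nx, kx, aRx, aIx]
    simp only [haR, haI, hbR, hbI, hS, hf', hγ', hn', hm', hd']
    push_cast
    have hg1 : (g p : ℂ) ≠ 0 := by exact_mod_cast hg0
    have hk1 : (k p : ℂ) ≠ 0 := by exact_mod_cast hk0
    have he1 : (e p : ℂ) ≠ 0 := by exact_mod_cast he0
    field_simp
    ring_nf
    simp only [I_sq, I_pow_three]
    ring
  · rw [fp12]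
    simp (disch := fun_prop) only [hf', Dx_mul_s19, Dx_const, Dx_ofReal, nx, kx]
    simp only [hn', hm']
    push_cast
    have hg1 : (g p : ℂ) ≠ 0 := by exact_mod_cast hg0
    have hk1 : (k p : ℂ) ≠ 0 := by exact_mod_cast hk0
    field_simp
    ring
  · have h := congrFun fp12 p
    simp only [mul_assoc] at h ⊢
    rw [h]
    push_cast
    ring
end
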